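/- Let (C, D) be an out-j collapsible pair with D nonempty. If D is contractible, then the number of outwardly matched j-faces is zero, i.e., the collapsing sequence restricts to a collapsing sequence of D onto a vertex; hence D is collapsible. -/

import Mathlib

/-- An abstract (finite, graded) face poset carrying a dimension function and a
codimension-one face ("facet") relation, modelling the combinatorics of a
finite regular CW complex. -/
structure MorseSetup (F : Type) where
  dim : F → ℕ
  facet : F → F → Prop
  facet_dim : ∀ σ τ, facet σ τ → dim τ = dim σ + 1

/-- A discrete vector field: pairs `(σ, Σ)` with `σ` a codimension-one face of `Σ`,
no face belonging to two different pairs. -/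
def IsDVF {F : Type} (S : MorseSetup F) (Φ : Finset (F × F)) : Prop :=
  (∀ p ∈ Φ, S.facet p.1 p.2) ∧
  ∀ p ∈ Φ, ∀ q ∈ Φ, p ≠ q → p.1 ≠ q.1 ∧ p.1 ≠ q.2 ∧ p.2 ≠ q.1 ∧ p.2 ≠ q.2

/-- Existence of a closed gradient path `(σ_0,Σ_0),…,(σ_k,Σ_k)`, `k ≥ 1`,
with `σ_{i+1} ≠ σ_i`, `σ_{i+1}` a facet of `Σ_i` and `σ_0 = σ_k`. -/
def HasClosedGradientPath {F : Type} (S : MorseSetup F) (Φ : Finset (F × F)) : Prop :=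
  ∃ (k : ℕ) (σ T : ℕ → F), 1 ≤ k ∧
    (∀ i ≤ k, (σ i, T i) ∈ Φ) ∧
    (∀ i < k, σ (i + 1) ≠ σ i ∧ S.facet (σ (i + 1)) (T i)) ∧
    σ 0 = σ k

/-- A Morse matching is a discrete vector field without closed gradient paths. -/
def IsMorseMatching {F : Type} (S : MorseSetup F) (Φ : Finset (F × F)) : Prop :=
  IsDVF S Φ ∧ ¬ HasClosedGradientPath S Φ

/-- A face is critical if it belongs to no matching pair. -/
def IsCritical {F : Type} (Φ : Finset (F × F)) (x : F) : Prop :=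
  ∀ p ∈ Φ, x ≠ p.1 ∧ x ≠ p.2

/-- A face `τ` of the subcomplex `D` is outwardly matched if it is matched with
a face not belonging to `D`. -/
def OutwardlyMatched {F : Type} (Φ : Finset (F × F)) (D : Finset F) (τ : F) : Prop :=
  τ ∈ D ∧ ∃ p ∈ Φ, (p.1 = τ ∧ p.2 ∉ D) ∨ (p.2 = τ ∧ p.1 ∉ D)

/-- A collapsing sequence from the whole complex to the vertex `v`: a Morse matching
whose unique critical face is the vertex `v`. -/
def IsCollapsingSeq {F : Type} (S : MorseSetup F) (Φ : Finset (F × F)) (v : F) : Prop :=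
  IsMorseMatching S Φ ∧ S.dim v = 0 ∧ ∀ x, IsCritical Φ x ↔ x = v

/-- `(C, D)` is out-`j` collapsible via `Φ`: `Φ` is a collapsing sequence from `C`
to a vertex of `D` in which every outwardly matched face has dimension `j`. -/
def IsOutJCollapsingSeq {F : Type} (S : MorseSetup F) (Φ : Finset (F × F))
    (D : Finset F) (j : ℕ) : Prop :=
  (∃ v ∈ D, IsCollapsingSeq S Φ v) ∧ ∀ τ, OutwardlyMatched Φ D τ → S.dim τ = j

/-- `D` is a subcomplex: closed under passing to codimension-one faces. -/
def IsSubcomplex {F : Type} (S : MorseSetup F) (D : Finset F) : Prop :=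
  ∀ σ τ, S.facet σ τ → τ ∈ D → σ ∈ D

open Metric in
/-- A (finite) regular CW structure on the topological space `X`, with faces indexed by `F`:
each face has a characteristic map from a closed ball which is a continuous injection
(regularity), open cells are pairwise disjoint and cover `X`, and the boundary of each cell
lies in the union of the closed cells of lower dimension. -/
structure RegularCW (F : Type) [Fintype F] (X : Type) [TopologicalSpace X] where
  dim : F → ℕ
  charMap : (f : F) → (closedBall (0 : EuclideanSpace ℝ (Fin (dim f))) 1) → X
  continuous_charMap : ∀ f, Continuous (charMap f)
  injective_charMap : ∀ f, Function.Injective (charMap f)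
  disjoint_openCells : ∀ f g, f ≠ g →
    Disjoint (charMap f '' {x | ‖(x : EuclideanSpace ℝ (Fin (dim f)))‖ < 1})
      (charMap g '' {x | ‖(x : EuclideanSpace ℝ (Fin (dim g)))‖ < 1})
  cover : (⋃ f, Set.range (charMap f)) = Set.univ
  boundary : ∀ f, charMap f '' {x | ‖(x : EuclideanSpace ℝ (Fin (dim f)))‖ = 1} ⊆
    ⋃ g ∈ {g | dim g < dim f}, Set.range (charMap g)

/-- The closed cell of the face `f`. -/
def RegularCW.cell {F X : Type} [Fintype F] [TopologicalSpace X]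
    (C : RegularCW F X) (f : F) : Set X :=
  Set.range (C.charMap f)

/-- The face structure underlying a regular CW complex: `σ` is a codimension-one face of
`τ` if the closed cell of `σ` is contained in that of `τ` and dimensions differ by one. -/
def RegularCW.toSetup {F X : Type} [Fintype F] [TopologicalSpace X]
    (C : RegularCW F X) : MorseSetup F where
  dim := C.dim
  facet := fun σ τ => σ ≠ τ ∧ C.cell σ ⊆ C.cell τ ∧ C.dim τ = C.dim σ + 1
  facet_dim := fun _ _ h => h.2.2

/-- `D` is a subcomplex of the regular CW complex: it is closed under taking faces. -/
def RegularCW.Subcomplex {F X : Type} [Fintype F] [TopologicalSpace X]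
    (C : RegularCW F X) (D : Finset F) : Prop :=
  ∀ σ τ, C.cell σ ⊆ C.cell τ → τ ∈ D → σ ∈ D

/-- The geometric realization (underlying point set) of the subcomplex `D`. -/
def RegularCW.real {F X : Type} [Fintype F] [TopologicalSpace X]
    (C : RegularCW F X) (D : Finset F) : Set X :=
  ⋃ f ∈ D, C.cell f

/-- A collapsing sequence of the subcomplex `D` onto a vertex `v ∈ D`: a Morse matching
all of whose pairs consist of faces of `D`, whose unique critical face in `D` is `v`. -/
def IsCollapsingSeqOn {F : Type} (S : MorseSetup F) (Φ : Finset (F × F))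
    (D : Finset F) (v : F) : Prop :=
  IsMorseMatching S Φ ∧ v ∈ D ∧ S.dim v = 0 ∧
    (∀ p ∈ Φ, p.1 ∈ D ∧ p.2 ∈ D) ∧ ∀ x ∈ D, (IsCritical Φ x ↔ x = v)

/-!
Matched faces have dimensions of opposite parity. A vertex is the only critical face of the matching
of `C`, and the faces matched outwardly all have dimension `j`, so the faces of `D` satisfy
`∑ f ∈ D, (-1) ^ dim f = 1 + (-1) ^ j * m`, where `m` is the number of outwardly matched faces.
The left-hand side is the Euler characteristic of the space `D`. If `D` is contractible, then it is
`1`, and hence `m = 0`.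

The Euler characteristic is that of Alexander–Spanier cohomology modulo two: a face of dimension `n`
contributes `(-1) ^ n`, by excision and the long exact sequence of a pair. The faces can be
attached one at a time because the frontier of a cell of a regular CW complex is a union of cells,
which is a consequence of the invariance of domain.
-/

/-! ### Subquotients and long exact sequences -/

/-- The subquotient `Z / (Z ∩ B)` of a module, with which cohomology is defined as cocycles modulo
coboundaries. The submodule `B` need not be contained in `Z`. -/
abbrev Subquotient {R M : Type*} [Ring R] [AddCommGroup M] [Module R M] (Z B : Submodule R M) :
    Type _ :=
  Z ⧸ B.submoduleOf Z

namespace Subquotient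

variable {R M N P : Type*} [Ring R] [AddCommGroup M] [Module R M] [AddCommGroup N] [Module R N]
  [AddCommGroup P] [Module R P] {Z₁ B₁ : Submodule R M} {Z₂ B₂ : Submodule R N}
  {Z₃ B₃ : Submodule R P}

/-- The map of subquotients induced by a linear map. -/
def map (T : M →ₗ[R] N) (hZ : Z₁ ≤ Z₂.comap T) (hB : B₁ ≤ B₂.comap T) :
    Subquotient Z₁ B₁ →ₗ[R] Subquotient Z₂ B₂ :=
  Submodule.mapQ _ _ (T.restrict hZ) fun x hx ↦ hB (x := (x : M)) hx

theorem mk_eq_zero {z : Z₁} : (Submodule.Quotient.mk z : Subquotient Z₁ B₁) = 0 ↔ (z : M) ∈ B₁ :=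
  Submodule.Quotient.mk_eq_zero _

theorem mk_eq_mk {z w : Z₁} :
    (Submodule.Quotient.mk z : Subquotient Z₁ B₁) = Submodule.Quotient.mk w ↔
      (z - w : M) ∈ B₁ :=
  Submodule.Quotient.eq _

theorem subsingleton_iff : Subsingleton (Subquotient Z₁ B₁) ↔ Z₁ ≤ B₁ := by
  rw [Submodule.Quotient.subsingleton_iff, Submodule.submoduleOf_eq_top]

theorem map_injective {T : M →ₗ[R] N} (hZ : Z₁ ≤ Z₂.comap T) (hB : B₁ ≤ B₂.comap T)
    (h : ∀ z ∈ Z₁, T z ∈ B₂ → z ∈ B₁) : Function.Injective (map T hZ hB) := by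
  refine (injective_iff_map_eq_zero _).2 fun x hx ↦ ?_
  obtain ⟨z, rfl⟩ := Submodule.Quotient.mk_surjective _ x
  exact mk_eq_zero.2 (h z z.2 (mk_eq_zero.1 hx))

theorem map_surjective {T : M →ₗ[R] N} (hZ : Z₁ ≤ Z₂.comap T) (hB : B₁ ≤ B₂.comap T)
    (h : ∀ w ∈ Z₂, ∃ z ∈ Z₁, T z - w ∈ B₂) : Function.Surjective (map T hZ hB) := by
  intro y
  obtain ⟨w, rfl⟩ := Submodule.Quotient.mk_surjective _ y
  obtain ⟨z, hz, hzw⟩ := h w w.2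
  exact ⟨Submodule.Quotient.mk ⟨z, hz⟩, mk_eq_mk.2 hzw⟩

theorem map_exact {S : M →ₗ[R] N} {T : N →ₗ[R] P} (hZ : Z₁ ≤ Z₂.comap S) (hB : B₁ ≤ B₂.comap S)
    (hZ' : Z₂ ≤ Z₃.comap T) (hB' : B₂ ≤ B₃.comap T) (h : ∀ x ∈ Z₁, T (S x) ∈ B₃)
    (h' : ∀ y ∈ Z₂, T y ∈ B₃ → ∃ x ∈ Z₁, S x - y ∈ B₂) :
    Function.Exact (map S hZ hB) (map T hZ' hB') := by
  intro y
  obtain ⟨y, rfl⟩ := Submodule.Quotient.mk_surjective _ y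
  constructor
  · intro hy
    obtain ⟨x, hx, hxy⟩ := h' y y.2 (mk_eq_zero.1 hy)
    exact ⟨Submodule.Quotient.mk ⟨x, hx⟩, mk_eq_mk.2 hxy⟩
  · rintro ⟨x, hx⟩
    obtain ⟨x, rfl⟩ := Submodule.Quotient.mk_surjective _ x
    rw [← hx]
    exact mk_eq_zero.2 (h x x.2)

end Subquotient

section LongExactSequence

variable {K : Type*} [DivisionRing K] {X Y Z : ℕ → Type*} [∀ k, AddCommGroup (X k)]
  [∀ k, Module K (X k)] [∀ k, AddCommGroup (Y k)] [∀ k, Module K (Y k)] [∀ k, AddCommGroup (Z k)]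
  [∀ k, Module K (Z k)] {i : ∀ k, X k →ₗ[K] Y k} {r : ∀ k, Y k →ₗ[K] Z k}
  {δ : ∀ k, Z k →ₗ[K] X (k + 1)} [∀ k, FiniteDimensional K (X k)] [∀ k, FiniteDimensional K (Z k)]

theorem finiteDimensional_of_exact (hir : ∀ k, Function.Exact (i k) (r k)) (k : ℕ) :
    FiniteDimensional K (Y k) := by
  have : FiniteDimensional K (r k).ker := by
    rw [(hir k).linearMap_ker_eq]
    infer_instance
  have : FiniteDimensional K (Y k ⧸ (r k).ker) := .equiv (r k).quotKerEquivRange.symm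
  exact .of_submodule_quotient (r k).ker

theorem sum_neg_one_pow_finrank_of_exact (hi : Function.Injective (i 0))
    (hir : ∀ k, Function.Exact (i k) (r k)) (hrδ : ∀ k, Function.Exact (r k) (δ k))
    (hδi : ∀ k, Function.Exact (δ k) (i (k + 1))) (n : ℕ) :
    ∑ k ∈ Finset.range n, (-1 : ℤ) ^ k * Module.finrank K (Y k) =
      ∑ k ∈ Finset.range n, (-1 : ℤ) ^ k * Module.finrank K (X k) +
        ∑ k ∈ Finset.range n, (-1 : ℤ) ^ k * Module.finrank K (Z k) +
        (-1) ^ n * Module.finrank K (i n).ker := by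
  induction n with
  | zero => rw [LinearMap.ker_eq_bot.2 hi, finrank_bot]; simp
  | succ n ih =>
    have := finiteDimensional_of_exact hir n
    have hX := (i n).finrank_range_add_finrank_ker
    have hY := (r n).finrank_range_add_finrank_ker
    have hZ := (δ n).finrank_range_add_finrank_ker
    rw [(hir n).linearMap_ker_eq] at hY
    rw [(hrδ n).linearMap_ker_eq, ← (hδi n).linearMap_ker_eq] at hZ
    simp only [Finset.sum_range_succ, ih, ← hX, ← hY, ← hZ]
    push_cast
    ring

end LongExactSequence

/-! ### Alexander–Spanier cohomology -/

namespace AlexanderSpanier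

open Finset

section Cochains

variable {E E' : Type*}

/-- Alexander–Spanier cochains modulo two, of all degrees at once: the restriction of a cochain to
the lists of length `k + 1` is its component of degree `k`, and the lists of length `0` give the
augmentation. -/
abbrev Cochain (E : Type*) : Type _ := List E → ZMod 2

/-- The Alexander–Spanier coboundary. -/
def coboundary : Cochain E →ₗ[ZMod 2] Cochain E :=
  LinearMap.pi fun l ↦ ∑ i ∈ range l.length, LinearMap.proj (l.eraseIdx i)

/-- The prism operator of two maps, a homotopy between the pullbacks along them. -/
def prism (f g : E → E') : Cochain E' →ₗ[ZMod 2] Cochain E :=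
  LinearMap.pi fun l ↦ ∑ i ∈ range l.length,
    LinearMap.proj ((l.take (i + 1)).map f ++ (l.drop i).map g)

/-- The pullback of cochains along a map. -/
def pullback (f : E → E') : Cochain E' →ₗ[ZMod 2] Cochain E :=
  LinearMap.funLeft _ _ (List.map f)

theorem coboundary_apply (φ : Cochain E) (l : List E) :
    coboundary φ l = ∑ i ∈ range l.length, φ (l.eraseIdx i) := by
  simp [coboundary]

theorem prism_apply (f g : E → E') (φ : Cochain E') (l : List E) :
    prism f g φ l =
      ∑ i ∈ range l.length, φ ((l.take (i + 1)).map f ++ (l.drop i).map g) := by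
  simp [prism]

theorem pullback_apply (f : E → E') (φ : Cochain E') (l : List E) :
    pullback f φ l = φ (l.map f) :=
  rfl

theorem coboundary_nil (φ : Cochain E) : coboundary φ [] = 0 := by
  simp [coboundary_apply]

theorem coboundary_cons (φ : Cochain E) (x : E) (l : List E) :
    coboundary φ (x :: l) = φ l + coboundary (fun m ↦ φ (x :: m)) l := by
  simp [coboundary_apply, sum_range_succ', add_comm]

theorem prism_nil (f g : E → E') (φ : Cochain E') : prism f g φ [] = 0 := by
  simp [prism_apply]

theorem prism_cons (f g : E → E') (φ : Cochain E') (x : E) (l : List E) :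
    prism f g φ (x :: l) =
      φ (f x :: g x :: l.map g) + prism f g (fun m ↦ φ (f x :: m)) l := by
  simp [prism_apply, sum_range_succ', add_comm]

theorem coboundary_pullback (f : E → E') (φ : Cochain E') :
    coboundary (pullback f φ) = pullback f (coboundary φ) := by
  ext l
  simp only [pullback_apply, coboundary_apply, List.length_map, List.eraseIdx_map]

theorem coboundary_coboundary (φ : Cochain E) : coboundary (coboundary φ) = 0 := by
  ext l
  induction l generalizing φ with
  | nil => exact coboundary_nil _
  | cons x l ih =>
    have h : (fun m ↦ coboundary φ (x :: m)) = φ + coboundary fun m ↦ φ (x :: m) := by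
      ext m
      exact coboundary_cons φ x m
    rw [coboundary_cons, h, map_add, Pi.add_apply, ih, Pi.zero_apply, add_zero]
    exact CharTwo.add_self_eq_zero _

theorem coboundary_prism_add_prism_coboundary (f g : E → E') (φ : Cochain E') :
    coboundary (prism f g φ) + prism f g (coboundary φ) = pullback f φ + pullback g φ := by
  ext l
  induction l generalizing φ with
  | nil => simp [coboundary_nil, prism_nil, pullback_apply, CharTwo.add_self_eq_zero]
  | cons x l ih =>
    have h₁ : (fun m ↦ prism f g φ (x :: m)) =
        pullback g (fun m ↦ φ (f x :: g x :: m)) + prism f g fun m ↦ φ (f x :: m) := by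
      ext m
      exact prism_cons f g φ x m
    have h₂ : (fun m ↦ coboundary φ (f x :: m)) = φ + coboundary fun m ↦ φ (f x :: m) := by
      ext m
      exact coboundary_cons φ (f x) m
    have ih := ih fun m ↦ φ (f x :: m)
    rw [Pi.add_apply, coboundary_cons, prism_cons f g (coboundary φ), h₁, h₂]
    simp only [map_add, coboundary_pullback, Pi.add_apply, pullback_apply, coboundary_cons,
      List.map_cons] at ih ⊢
    linear_combination ih + CharTwo.add_self_eq_zero (prism f g φ l) +
      CharTwo.add_self_eq_zero (coboundary (fun m ↦ φ (f x :: g x :: m)) (l.map g)) +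
      CharTwo.add_self_eq_zero (φ (f x :: l.map g))

theorem pullback_sub_pullback (f g : E → E') (φ : Cochain E') :
    pullback f φ - pullback g φ = coboundary (prism f g φ) + prism f g (coboundary φ) := by
  rw [coboundary_prism_add_prism_coboundary, CharTwo.sub_eq_add]

end Cochains

section Cohomology

open scoped Uniformity

variable {E : Type*} {U V : Set (E × E)} {A A' B B' C : Set E} {k n : ℕ}
  {φ ψ : Cochain E} {l m : List E}

/-- The list `l` is a `U`-small simplex of `A`: its vertices are points of `A` which are pairwise
`U`-close. -/
def IsSmall (U : Set (E × E)) (A : Set E) (l : List E) : Prop :=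
  (∀ x ∈ l, x ∈ A) ∧ ∀ x ∈ l, ∀ y ∈ l, (x, y) ∈ U

theorem IsSmall.mono (h : IsSmall U A l) (hU : U ⊆ V) (hA : A ⊆ B) : IsSmall V B l :=
  ⟨fun x hx ↦ hA (h.1 x hx), fun x hx y hy ↦ hU (h.2 x hx y hy)⟩

theorem IsSmall.subset (h : IsSmall U A l) (hm : m ⊆ l) : IsSmall U A m :=
  ⟨fun x hx ↦ h.1 x (hm hx), fun x hx y hy ↦ h.2 x (hm hx) y (hm hy)⟩

theorem isSmall_nil : IsSmall U A [] := by
  simp [IsSmall]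

variable [UniformSpace E]

theorem isSmall_replicate {c : E} (hU : U ∈ 𝓤 E) (hc : c ∈ A) (n : ℕ) :
    IsSmall U A (List.replicate n c) :=
  ⟨fun _ hx ↦ List.eq_of_mem_replicate hx ▸ hc, fun _ hx _ hy ↦
    List.eq_of_mem_replicate hx ▸ List.eq_of_mem_replicate hy ▸ refl_mem_uniformity hU⟩

/-- The cochains which vanish on all sufficiently small simplices of `A` with `n` vertices. The
Alexander–Spanier cochains of `A` are the cochains modulo these. -/
def vanishing (n : ℕ) (A : Set E) : Submodule (ZMod 2) (Cochain E) where
  carrier := {φ | ∃ U ∈ 𝓤 E, ∀ l : List E, l.length = n → IsSmall U A l → φ l = 0}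
  add_mem' := by
    rintro φ ψ ⟨U, hU, hφ⟩ ⟨V, hV, hψ⟩
    refine ⟨U ∩ V, Filter.inter_mem hU hV, fun l hn hl ↦ ?_⟩
    rw [Pi.add_apply, hφ l hn (hl.mono Set.inter_subset_left subset_rfl),
      hψ l hn (hl.mono Set.inter_subset_right subset_rfl), add_zero]
  zero_mem' := ⟨Set.univ, Filter.univ_mem, fun _ _ _ ↦ rfl⟩
  smul_mem' := by
    rintro c φ ⟨U, hU, hφ⟩
    exact ⟨U, hU, fun l hn hl ↦ by rw [Pi.smul_apply, hφ l hn hl, smul_zero]⟩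

theorem vanishing_anti (h : B ⊆ A) : vanishing n A ≤ vanishing n B :=
  fun _ ⟨U, hU, hφ⟩ ↦ ⟨U, hU, fun l hn hl ↦ hφ l hn (hl.mono subset_rfl h)⟩

theorem mem_vanishing_of_forall (h : ∀ l : List E, l.length = n → (∀ x ∈ l, x ∈ A) → φ l = 0) :
    φ ∈ vanishing n A :=
  ⟨Set.univ, Filter.univ_mem, fun l hn hl ↦ h l hn hl.1⟩

theorem vanishing_succ_empty : vanishing (n + 1) (∅ : Set E) = ⊤ := by
  refine eq_top_iff.2 fun φ _ ↦ mem_vanishing_of_forall fun l hn hl ↦ ?_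
  obtain ⟨x, m, rfl⟩ := List.exists_cons_of_length_eq_add_one hn
  exact absurd (hl x List.mem_cons_self) (Set.notMem_empty x)

theorem coboundary_mem_vanishing (h : φ ∈ vanishing n A) : coboundary φ ∈ vanishing (n + 1) A := by
  obtain ⟨U, hU, hφ⟩ := h
  refine ⟨U, hU, fun l hn hl ↦ ?_⟩
  rw [coboundary_apply]
  refine sum_eq_zero fun i hi ↦ hφ _ ?_ (hl.subset List.eraseIdx_subset)
  rw [List.length_eraseIdx_of_lt (mem_range.1 hi), hn, Nat.add_sub_cancel]

/-- The relative cocycles of degree `k` of the pair `(A, B)`. -/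
def cocycles (k : ℕ) (A B : Set E) : Submodule (ZMod 2) (Cochain E) :=
  vanishing (k + 1) B ⊓ (vanishing (k + 2) A).comap coboundary

/-- The relative coboundaries of degree `k` of the pair `(A, B)`, together with the cochains which
vanish near the diagonal of `A`. -/
def coboundaries (k : ℕ) (A B : Set E) : Submodule (ZMod 2) (Cochain E) :=
  vanishing (k + 1) A ⊔ (vanishing k B).map coboundary

/-- The Alexander–Spanier cohomology modulo two of the pair `(A, B)` in degree `k`. -/
abbrev Cohomology (k : ℕ) (A B : Set E) : Type _ :=
  Subquotient (cocycles k A B) (coboundaries k A B)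

theorem mem_cocycles :
    φ ∈ cocycles k A B ↔ φ ∈ vanishing (k + 1) B ∧ coboundary φ ∈ vanishing (k + 2) A :=
  Iff.rfl

theorem mem_coboundaries :
    φ ∈ coboundaries k A B ↔
      ∃ α ∈ vanishing (k + 1) A, ∃ β ∈ vanishing k B, α + coboundary β = φ := by
  simp [coboundaries, Submodule.mem_sup]

theorem vanishing_le_coboundaries : vanishing (k + 1) A ≤ coboundaries k A B :=
  le_sup_left

theorem coboundary_mem_coboundaries (h : φ ∈ vanishing k B) :
    coboundary φ ∈ coboundaries k A B :=
  Submodule.mem_sup_right (Submodule.mem_map_of_mem h)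

theorem coboundaries_zero : coboundaries 0 A B = vanishing 1 A := by
  refine le_antisymm (sup_le le_rfl ?_) vanishing_le_coboundaries
  rintro _ ⟨φ, ⟨U, -, hφ⟩, rfl⟩
  refine mem_vanishing_of_forall fun l hn _ ↦ ?_
  obtain ⟨x, rfl⟩ := List.length_eq_one_iff.1 hn
  rw [coboundary_cons, coboundary_nil, hφ [] rfl isSmall_nil, add_zero]

theorem cocycles_le_comap_id (hA : A' ⊆ A) (hB : B' ⊆ B) :
    cocycles k A B ≤ (cocycles k A' B').comap LinearMap.id :=
  fun _ hφ ↦ ⟨vanishing_anti hB hφ.1, vanishing_anti hA hφ.2⟩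

theorem coboundaries_le_comap_id (hA : A' ⊆ A) (hB : B' ⊆ B) :
    coboundaries k A B ≤ (coboundaries k A' B').comap LinearMap.id :=
  sup_le_sup (vanishing_anti hA) (Submodule.map_mono (vanishing_anti hB))

theorem cocycles_le_comap_coboundary :
    cocycles k B C ≤ (cocycles (k + 1) A B).comap coboundary := by
  intro φ hφ
  refine mem_cocycles.2 ⟨hφ.2, ?_⟩
  rw [coboundary_coboundary]
  exact zero_mem _

theorem coboundaries_le_comap_coboundary :
    coboundaries k B C ≤ (coboundaries (k + 1) A B).comap coboundary := by
  intro φ hφ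
  obtain ⟨α, hα, β, -, rfl⟩ := mem_coboundaries.1 hφ
  rw [Submodule.mem_comap, map_add, coboundary_coboundary, add_zero]
  exact coboundary_mem_coboundaries hα

/-- The restriction of cohomology classes to a smaller pair. -/
def restrict (k : ℕ) (hA : A' ⊆ A) (hB : B' ⊆ B) :
    Cohomology k A B →ₗ[ZMod 2] Cohomology k A' B' :=
  Subquotient.map LinearMap.id (cocycles_le_comap_id hA hB) (coboundaries_le_comap_id hA hB)

/-- The connecting homomorphism of the triple `(A, B, C)`. -/
def connecting (k : ℕ) (A B C : Set E) :
    Cohomology k B C →ₗ[ZMod 2] Cohomology (k + 1) A B :=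
  Subquotient.map coboundary cocycles_le_comap_coboundary coboundaries_le_comap_coboundary

theorem restrict_zero_injective (hCB : C ⊆ B) :
    Function.Injective (restrict 0 (subset_refl A) hCB) :=
  Subquotient.map_injective _ _ fun φ _ h ↦ by
    rw [LinearMap.id_apply, coboundaries_zero] at h
    exact vanishing_le_coboundaries h

theorem restrict_exact_restrict (hBA : B ⊆ A) (hCB : C ⊆ B) (k : ℕ) :
    Function.Exact (restrict k (subset_refl A) hCB) (restrict k hBA (subset_refl C)) := by
  refine Subquotient.map_exact _ _ _ _ (fun φ hφ ↦ vanishing_le_coboundaries hφ.1) ?_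
  intro φ hφ h
  obtain ⟨α, hα, β, hβ, h⟩ := mem_coboundaries.1 h
  rw [LinearMap.id_apply] at h
  subst h
  refine ⟨α, ⟨hα, ?_⟩, ?_⟩
  · simpa [coboundary_coboundary] using hφ.2
  · rw [LinearMap.id_apply, sub_add_cancel_left]
    exact neg_mem (coboundary_mem_coboundaries hβ)

theorem restrict_exact_connecting (hBA : B ⊆ A) (hCB : C ⊆ B) (k : ℕ) :
    Function.Exact (restrict k hBA (subset_refl C)) (connecting k A B C) := by
  refine Subquotient.map_exact _ _ _ _ (fun φ hφ ↦ vanishing_le_coboundaries hφ.2) ?_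
  intro φ hφ h
  obtain ⟨α, hα, β, hβ, h⟩ := mem_coboundaries.1 h
  refine ⟨φ - β, mem_cocycles.2 ⟨sub_mem hφ.1 (vanishing_anti hCB hβ), ?_⟩, ?_⟩
  · rw [map_sub, ← h, add_sub_cancel_right]
    exact hα
  · rw [LinearMap.id_apply, sub_sub_cancel_left]
    exact neg_mem (vanishing_le_coboundaries hβ)

theorem connecting_exact_restrict (hBA : B ⊆ A) (hCB : C ⊆ B) (k : ℕ) :
    Function.Exact (connecting k A B C) (restrict (k + 1) (subset_refl A) hCB) := by
  refine Subquotient.map_exact _ _ _ _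
    (fun φ hφ ↦ coboundary_mem_coboundaries hφ.1) ?_
  intro φ hφ h
  obtain ⟨α, hα, β, hβ, h⟩ := mem_coboundaries.1 h
  rw [LinearMap.id_apply] at h
  subst h
  refine ⟨β, ⟨hβ, ?_⟩, ?_⟩
  · have := sub_mem hφ.1 (vanishing_anti hBA hα)
    rwa [add_sub_cancel_left] at this
  · rw [sub_add_cancel_right]
    exact neg_mem (vanishing_le_coboundaries hα)

end Cohomology

section Pullback

variable {E E' E'' : Type*} {l : List E} {f g : E → E'}

theorem pullback_id (φ : Cochain E) : pullback id φ = φ := by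
  ext l
  rw [pullback_apply, List.map_id]

theorem pullback_pullback (f : E → E') (g : E' → E'') (φ : Cochain E'') :
    pullback f (pullback g φ) = pullback (g ∘ f) φ := by
  ext l
  rw [pullback_apply, pullback_apply, List.map_map, pullback_apply]

theorem prism_eq_zero {φ : Cochain E'}
    (h : ∀ m ⊆ l.map f ++ l.map g, m.length = l.length + 1 → φ m = 0) : prism f g φ l = 0 := by
  rw [prism_apply]
  refine sum_eq_zero fun i hi ↦ h _ ?_ ?_
  · exact List.append_subset.2
      ⟨List.subset_append_of_subset_left _ (List.map_subset f (List.take_subset _ l)),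
        List.subset_append_of_subset_right _ (List.map_subset g (List.drop_subset _ l))⟩
  · have := mem_range.1 hi
    simp only [List.length_append, List.length_map, List.length_take, List.length_drop]
    omega

end Pullback

section Homotopy

open scoped Topology Uniformity unitInterval

variable {E E' : Type*} [UniformSpace E] {f : E → E'} {A B : Set E} {A' B' : Set E'}
  {U : Set (E' × E')} {V : Set (E × E)} {k n : ℕ} {φ : Cochain E'}

theorem pullback_sub_pullback_mem_vanishing {g : E → E'} (h : Set.EqOn f g A) (φ : Cochain E') :
    pullback f φ - pullback g φ ∈ vanishing n A := by
  refine mem_vanishing_of_forall fun l _ hl ↦ ?_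
  rw [Pi.sub_apply, pullback_apply, pullback_apply, List.map_congr_left fun x hx ↦ h (hl x hx),
    sub_self]

theorem pullback_sub_pullback_mem_coboundaries_of_contiguous {g : E → E'} (hV : V ∈ 𝓤 E)
    (hB : ∀ l : List E', l.length = k + 1 → IsSmall U B' l → φ l = 0)
    (hA : ∀ l : List E', l.length = k + 2 → IsSmall U A' l → coboundary φ l = 0)
    (hfgB : ∀ l, IsSmall V B l → IsSmall U B' (l.map f ++ l.map g))
    (hfgA : ∀ l, IsSmall V A l → IsSmall U A' (l.map f ++ l.map g)) :
    pullback f φ - pullback g φ ∈ coboundaries k A B := by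
  rw [pullback_sub_pullback]
  refine add_mem (coboundary_mem_coboundaries ⟨V, hV, fun l hn hl ↦ ?_⟩)
    (vanishing_le_coboundaries ⟨V, hV, fun l hn hl ↦ ?_⟩)
  · exact prism_eq_zero fun m hm hml ↦ hB m (by rw [hml, hn]) ((hfgB l hl).subset hm)
  · exact prism_eq_zero fun m hm hml ↦ hA m (by rw [hml, hn]) ((hfgA l hl).subset hm)

variable [UniformSpace E']

/-- The map `f` restricts to a uniformly continuous map of pairs `(A, B) → (A', B')`, so that it
induces a map in cohomology. -/
structure IsPairMap (f : E → E') (A B : Set E) (A' B' : Set E') : Prop where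
  uniformContinuousOn : UniformContinuousOn f A
  mapsTo : Set.MapsTo f A A'
  mapsTo_sub : Set.MapsTo f B B'

theorem exists_forall_isSmall_map (hf : UniformContinuousOn f A) (hU : U ∈ 𝓤 E') :
    ∃ V ∈ 𝓤 E, ∀ B ⊆ A, ∀ B', Set.MapsTo f B B' → ∀ l, IsSmall V B l → IsSmall U B' (l.map f) := by
  refine ⟨_, Filter.mem_inf_principal.1 (hf hU), fun B hBA B' hB l hl ↦ ⟨?_, ?_⟩⟩
  · exact List.forall_mem_map.2 fun x hx ↦ hB (hl.1 x hx)
  · exact List.forall_mem_map.2 fun x hx ↦ List.forall_mem_map.2 fun y hy ↦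
      hl.2 x hx y hy ⟨hBA (hl.1 x hx), hBA (hl.1 y hy)⟩

theorem pullback_mem_vanishing (hf : UniformContinuousOn f A) (hA : Set.MapsTo f A A')
    (h : φ ∈ vanishing n A') : pullback f φ ∈ vanishing n A := by
  obtain ⟨U, hU, hφ⟩ := h
  obtain ⟨V, hV, hVU⟩ := exists_forall_isSmall_map hf hU
  exact ⟨V, hV, fun l hn hl ↦ hφ _ (by rw [List.length_map, hn]) (hVU A subset_rfl A' hA l hl)⟩

theorem IsPairMap.cocycles_le (hf : IsPairMap f A B A' B') (hBA : B ⊆ A) (k : ℕ) :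
    cocycles k A' B' ≤ (cocycles k A B).comap (pullback f) := fun φ hφ ↦
  mem_cocycles.2 ⟨pullback_mem_vanishing (hf.uniformContinuousOn.mono hBA) hf.mapsTo_sub hφ.1, by
    rw [coboundary_pullback]
    exact pullback_mem_vanishing hf.uniformContinuousOn hf.mapsTo hφ.2⟩

theorem IsPairMap.coboundaries_le (hf : IsPairMap f A B A' B') (hBA : B ⊆ A) (k : ℕ) :
    coboundaries k A' B' ≤ (coboundaries k A B).comap (pullback f) := by
  intro φ hφ
  obtain ⟨α, hα, β, hβ, rfl⟩ := mem_coboundaries.1 hφ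
  refine mem_coboundaries.2 ⟨_, pullback_mem_vanishing hf.uniformContinuousOn hf.mapsTo hα, _,
    pullback_mem_vanishing (hf.uniformContinuousOn.mono hBA) hf.mapsTo_sub hβ, ?_⟩
  rw [map_add, coboundary_pullback]

/-- The map induced in cohomology by a map of pairs. -/
def IsPairMap.inducedMap (hf : IsPairMap f A B A' B') (hBA : B ⊆ A) (k : ℕ) :
    Cohomology k A' B' →ₗ[ZMod 2] Cohomology k A B :=
  Subquotient.map (pullback f) (hf.cocycles_le hBA k) (hf.coboundaries_le hBA k)

theorem IsPairMap.inducedMap_bijective {g : E' → E} (hf : IsPairMap f A B A' B')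
    (hg : IsPairMap g A' B' A B) (hBA : B ⊆ A) (hBA' : B' ⊆ A') (hgf : Set.LeftInvOn g f A)
    (hfg : Set.LeftInvOn f g A') (k : ℕ) : Function.Bijective (hf.inducedMap hBA k) := by
  have hgf' (φ : Cochain E) : pullback f (pullback g φ) - φ ∈ vanishing (k + 1) A := by
    rw [pullback_pullback]
    simpa only [pullback_id] using pullback_sub_pullback_mem_vanishing (f := g ∘ f) (g := id) hgf φ
  have hfg' (φ : Cochain E') : pullback g (pullback f φ) - φ ∈ vanishing (k + 1) A' := by
    rw [pullback_pullback]
    simpa only [pullback_id] using pullback_sub_pullback_mem_vanishing (f := f ∘ g) (g := id) hfg φ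
  refine ⟨Subquotient.map_injective _ _ fun φ _ h ↦ ?_,
    Subquotient.map_surjective _ _ fun φ hφ ↦ ?_⟩
  · rw [← sub_sub_cancel (pullback g (pullback f φ)) φ]
    exact sub_mem (hg.coboundaries_le hBA' k h) (vanishing_le_coboundaries (hfg' φ))
  · exact ⟨pullback g φ, hg.cocycles_le hBA' k hφ, vanishing_le_coboundaries (hgf' φ)⟩

theorem eventually_forall_isSmall_append {h : ℝ × E → E'}
    (hh : UniformContinuousOn h (I ×ˢ A)) (hU : U ∈ 𝓤 E') {s : ℝ} (hs : s ∈ I) :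
    ∃ V ∈ 𝓤 E, ∀ᶠ t in 𝓝[I] s, ∀ B ⊆ A, ∀ B', Set.MapsTo h (I ×ˢ B) B' → ∀ l, IsSmall V B l →
      IsSmall U B' (l.map (fun x ↦ h (s, x)) ++ l.map fun x ↦ h (t, x)) := by
  obtain ⟨W, hW, hWU⟩ := exists_forall_isSmall_map hh hU
  rw [uniformity_prod_eq_prod, Filter.mem_map, Filter.mem_prod_iff] at hW
  obtain ⟨P, hP, V, hV, hPV⟩ := hW
  refine ⟨V, hV, ?_⟩
  filter_upwards [mem_nhdsWithin_of_mem_nhds (mem_nhds_left s hP),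
    mem_nhdsWithin_of_mem_nhds (mem_nhds_right s hP), self_mem_nhdsWithin] with t hst hts ht
  intro B hBA B' hB l hl
  have hW {a b : ℝ} (hab : (a, b) ∈ P) {x y : E} (hx : x ∈ l) (hy : y ∈ l) :
      ((a, x), (b, y)) ∈ W :=
    hPV (a := ((a, b), (x, y))) ⟨hab, hl.2 x hx y hy⟩
  have hrefl (a : ℝ) : (a, a) ∈ P := refl_mem_uniformity hP
  have hsmall : IsSmall W (I ×ˢ B) (l.map (s, ·) ++ l.map (t, ·)) := by
    simp only [IsSmall, List.forall_mem_append, List.forall_mem_map]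
    exact ⟨⟨fun x hx ↦ ⟨hs, hl.1 x hx⟩, fun x hx ↦ ⟨ht, hl.1 x hx⟩⟩,
      fun x hx ↦ ⟨fun y hy ↦ hW (hrefl s) hx hy, fun y hy ↦ hW hst hx hy⟩,
      fun x hx ↦ ⟨fun y hy ↦ hW hts hx hy, fun y hy ↦ hW (hrefl t) hx hy⟩⟩
  simpa [Function.comp_def] using hWU _ (Set.prod_mono_right hBA) _ hB _ hsmall

theorem pullback_sub_pullback_mem_coboundaries_of_homotopy {h : ℝ × E → E'}
    (hh : IsPairMap h (I ×ˢ A) (I ×ˢ B) A' B') (hBA : B ⊆ A) (hφ : φ ∈ cocycles k A' B') {s t : ℝ}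
    (hs : s ∈ I) (ht : t ∈ I) :
    pullback (fun x ↦ h (s, x)) φ - pullback (fun x ↦ h (t, x)) φ ∈ coboundaries k A B := by
  obtain ⟨⟨U, hU, hφB⟩, ⟨U', hU', hφA⟩⟩ := mem_cocycles.1 hφ
  refine isPreconnected_Icc.induction₂ (fun s t ↦ pullback (fun x ↦ h (s, x)) φ -
    pullback (fun x ↦ h (t, x)) φ ∈ coboundaries k A B) (fun s hs ↦ ?_) ?_ ?_ hs ht
  · obtain ⟨V, hV, hVU⟩ := eventually_forall_isSmall_append hh.uniformContinuousOn
      (Filter.inter_mem hU hU') hs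
    filter_upwards [hVU] with t ht
    exact pullback_sub_pullback_mem_coboundaries_of_contiguous hV
      (fun l hn hl ↦ hφB l hn (hl.mono Set.inter_subset_left subset_rfl))
      (fun l hn hl ↦ hφA l hn (hl.mono Set.inter_subset_right subset_rfl))
      (ht B hBA B' hh.mapsTo_sub) (ht A subset_rfl A' hh.mapsTo)
  · intro r s t _ _ _ hrs hst
    simpa only [sub_add_sub_cancel] using add_mem hrs hst
  · intro s t _ _ hst
    simpa only [neg_sub] using neg_mem hst

theorem uniformContinuousOn_slice {h : ℝ × E → E'} {T : Set ℝ}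
    (hh : UniformContinuousOn h (T ×ˢ A)) {t : ℝ} (ht : t ∈ T) :
    UniformContinuousOn (fun x ↦ h (t, x)) A :=
  uniformContinuousOn_iff_restrict.2 <| (uniformContinuousOn_iff_restrict.1 hh).comp <|
    (uniformContinuous_const.prodMk uniformContinuous_subtype_val).subtype_mk
      fun x : A ↦ (⟨ht, x.2⟩ : (t, (x : E)) ∈ T ×ˢ A)

theorem subsingleton_of_deformation {h : ℝ × E → E} (hh : IsPairMap h (I ×ˢ A) (I ×ˢ B) A B)
    (hBA : B ⊆ A) (h_zero : ∀ x ∈ A, h (0, x) = x) (h_one : ∀ x ∈ A, h (1, x) ∈ B) (k : ℕ) :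
    Subsingleton (Cohomology k A B) := by
  refine Subquotient.subsingleton_iff.2 fun φ hφ ↦ ?_
  have hzero : pullback (fun x ↦ h (0, x)) φ - φ ∈ coboundaries k A B :=
    vanishing_le_coboundaries <| by
      simpa only [pullback_id] using pullback_sub_pullback_mem_vanishing (g := id) h_zero φ
  have hone : pullback (fun x ↦ h (1, x)) φ ∈ coboundaries k A B :=
    vanishing_le_coboundaries <| pullback_mem_vanishing
      (uniformContinuousOn_slice hh.uniformContinuousOn unitInterval.one_mem) h_one hφ.1
  have hhom := pullback_sub_pullback_mem_coboundaries_of_homotopy hh hBA hφ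
    unitInterval.zero_mem unitInterval.one_mem
  simpa using sub_mem (add_mem hhom hone) hzero

end Homotopy

section Contraction

open scoped Uniformity unitInterval

variable {E : Type*} [UniformSpace E] {A : Set E} {c : E} {k : ℕ} {φ : Cochain E}

theorem pullback_const_mem_coboundaries (hc : c ∈ A) (hφ : φ ∈ cocycles k A ∅)
    (h₀ : k = 0 → φ [c] = 0) : pullback (fun _ : E ↦ c) φ ∈ coboundaries k A ∅ := by
  obtain ⟨-, U, hU, hφ⟩ := mem_cocycles.1 hφ
  set ψ := pullback (fun _ : E ↦ c) φ with hψ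
  -- The cone with apex `c` is a chain contraction.
  set cone : Cochain E := fun l ↦ ψ (c :: l)
  have h_cone : ψ - coboundary cone ∈ vanishing (k + 1) A := by
    refine mem_vanishing_of_forall fun l hl _ ↦ ?_
    have hd : coboundary ψ (c :: l) = 0 := by
      rw [hψ, coboundary_pullback, pullback_apply, List.map_const']
      exact hφ _ (by simp [hl]) (isSmall_replicate hU hc _)
    rw [Pi.sub_apply, CharTwo.sub_eq_add, ← coboundary_cons, hd]
  have h_cone' : cone ∈ vanishing k ∅ := by
    cases k with
    | zero =>
      refine mem_vanishing_of_forall fun l hl _ ↦ ?_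
      rw [List.length_eq_zero_iff.1 hl]
      exact h₀ rfl
    | succ k => rw [vanishing_succ_empty]; trivial
  simpa using add_mem (vanishing_le_coboundaries h_cone) (coboundary_mem_coboundaries h_cone')

theorem mem_coboundaries_of_contraction {h : ℝ × E → E} (hh : IsPairMap h (I ×ˢ A) (I ×ˢ ∅) A ∅)
    (hc : c ∈ A) (h_zero : ∀ x ∈ A, h (0, x) = x) (h_one : ∀ x ∈ A, h (1, x) = c)
    (hφ : φ ∈ cocycles k A ∅) (h₀ : k = 0 → φ [c] = 0) : φ ∈ coboundaries k A ∅ := by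
  have hzero : pullback (fun x ↦ h (0, x)) φ - φ ∈ coboundaries k A ∅ :=
    vanishing_le_coboundaries <| by
      simpa only [pullback_id] using pullback_sub_pullback_mem_vanishing (g := id) h_zero φ
  have hone : pullback (fun x ↦ h (1, x)) φ - pullback (fun _ ↦ c) φ ∈ coboundaries k A ∅ :=
    vanishing_le_coboundaries (pullback_sub_pullback_mem_vanishing h_one φ)
  have hhom := pullback_sub_pullback_mem_coboundaries_of_homotopy hh (Set.empty_subset A) hφ
    unitInterval.zero_mem unitInterval.one_mem
  have hconst := pullback_const_mem_coboundaries hc hφ h₀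
  simpa using sub_mem (add_mem hhom (add_mem hone hconst)) hzero

/-- The pair `(A, B)` has the cohomology of the closed cell of dimension `n` relative to its
boundary sphere. -/
structure IsCohomologyCell (n : ℕ) (A B : Set E) : Prop where
  finrank_eq_one : Module.finrank (ZMod 2) (Cohomology n A B) = 1
  subsingleton : ∀ k ≠ n, Subsingleton (Cohomology k A B)

theorem one_mem_cocycles : (1 : Cochain E) ∈ cocycles 0 A ∅ := by
  refine mem_cocycles.2 ⟨by rw [vanishing_succ_empty]; trivial,
    mem_vanishing_of_forall fun l hl _ ↦ ?_⟩
  obtain ⟨x, y, rfl⟩ := List.length_eq_two.1 hl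
  rw [coboundary_apply]
  rfl

theorem isCohomologyCell_zero_of_contraction {h : ℝ × E → E}
    (hh : IsPairMap h (I ×ˢ A) (I ×ˢ ∅) A ∅) (hc : c ∈ A) (h_zero : ∀ x ∈ A, h (0, x) = x)
    (h_one : ∀ x ∈ A, h (1, x) = c) : IsCohomologyCell 0 A ∅ := by
  constructor
  · refine finrank_eq_one (Submodule.Quotient.mk ⟨1, one_mem_cocycles⟩) ?_ fun x ↦ ?_
    · rw [Ne, Subquotient.mk_eq_zero, coboundaries_zero]
      rintro ⟨U, hU, h⟩
      exact one_ne_zero (h [c] rfl (isSmall_replicate hU hc 1))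
    · obtain ⟨⟨φ, hφ⟩, rfl⟩ := Submodule.Quotient.mk_surjective _ x
      refine ⟨φ [c], ?_⟩
      rw [← Submodule.Quotient.mk_smul, Subquotient.mk_eq_mk]
      refine mem_coboundaries_of_contraction hh hc h_zero h_one
        (sub_mem ((cocycles 0 A ∅).smul_mem _ one_mem_cocycles) hφ) fun _ ↦ ?_
      simp
  · exact fun k hk ↦ Subquotient.subsingleton_iff.2 fun φ hφ ↦
      mem_coboundaries_of_contraction hh hc h_zero h_one hφ (absurd · hk)

end Contraction

section Excision

open scoped Uniformity

variable {E : Type*} {A B : Set E} {V W : Set (E × E)} {g : E → E} {n : ℕ} {φ : Cochain E}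
  {l : List E}

/-- The map `g` moves points by at most `W`, fixes `B`, preserves `A`, and retracts onto `B` every
`V`-small simplex of `A ∪ B` which is not contained in `A`. -/
structure IsExcisionMap (A B : Set E) (V W : Set (E × E)) (g : E → E) : Prop where
  eqOn : Set.EqOn g id B
  mapsTo : Set.MapsTo g A A
  mapsTo_of_not_subset : ∀ l, IsSmall V (A ∪ B) l → ¬ (∀ x ∈ l, x ∈ A) → ∀ x ∈ l, g x ∈ B
  isSmall_append : ∀ S, Set.MapsTo g S S → ∀ l, IsSmall V S l → IsSmall W S (l ++ l.map g)

theorem IsExcisionMap.mapsTo_union (hg : IsExcisionMap A B V W g) :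
    Set.MapsTo g (A ∪ B) (A ∪ B) :=
  hg.mapsTo.union_union fun _ hx ↦ (hg.eqOn hx).symm ▸ hx

theorem IsExcisionMap.isSmall_map (hg : IsExcisionMap A B V W g) (hl : IsSmall V (A ∪ B) l) :
    IsSmall W A (l.map g) ∨ IsSmall W B (l.map g) := by
  have h := (hg.isSmall_append _ hg.mapsTo_union l hl).subset (List.subset_append_right _ _)
  by_cases hA : ∀ x ∈ l, x ∈ A
  · exact .inl ⟨List.forall_mem_map.2 fun x hx ↦ hg.mapsTo (hA x hx), h.2⟩
  · exact .inr ⟨List.forall_mem_map.2 (hg.mapsTo_of_not_subset l hl hA), h.2⟩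

open Classical in
theorem exists_mem_vanishing_sub_mem_vanishing [UniformSpace E] (h : φ ∈ vanishing n (A ∩ B)) :
    ∃ ψ ∈ vanishing n A, ψ - φ ∈ vanishing n B := by
  obtain ⟨U, hU, hφ⟩ := h
  refine ⟨fun l ↦ if ∀ x ∈ l, x ∈ A then 0 else φ l,
    mem_vanishing_of_forall fun l _ hl ↦ if_pos hl, U, hU, fun l hn hl ↦ ?_⟩
  rw [Pi.sub_apply]
  split_ifs with hA
  · rw [hφ l hn ⟨fun x hx ↦ ⟨hA x hx, hl.1 x hx⟩, hl.2⟩, sub_zero]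
  · rw [sub_self]

variable [UniformSpace E]

/-- Points of `A` and `B` can only be close to each other near `A ∩ B`. -/
def IsUniformlyExcisive (A B : Set E) : Prop :=
  ∀ U ∈ 𝓤 E, ∃ V ∈ 𝓤 E, ∀ x ∈ A, ∀ y ∈ B, (x, y) ∈ V → ∃ z ∈ A ∩ B, (x, z) ∈ U

theorem isUniformlyExcisive_of_isCompact (hA : IsCompact A) (hB : IsClosed B) :
    IsUniformlyExcisive A B := by
  intro U hU
  obtain ⟨W, ⟨hW, hWo, -⟩, hWU⟩ := uniformity_hasBasis_open_symmetric.mem_iff.1 hU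
  -- The part of `A` far from `A ∩ B` is compact and disjoint from `B`.
  set K := A \ ⋃ z ∈ A ∩ B, {x | (x, z) ∈ W}
  have hKc : IsCompact K := hA.diff <| isOpen_biUnion fun z _ ↦
    hWo.preimage (Continuous.prodMk_left z)
  have hKB : Disjoint K B := Set.disjoint_left.2 fun x hx hxB ↦
    hx.2 (Set.mem_biUnion (show x ∈ A ∩ B from ⟨hx.1, hxB⟩) (refl_mem_uniformity hW))
  obtain ⟨V, hV, hVd⟩ := hKB.exists_uniform_thickening hKc hB
  refine ⟨V, hV, fun x hx y hy hxy ↦ ?_⟩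
  by_contra! h
  have hxK : x ∈ K := ⟨hx, fun hx' ↦ by
    obtain ⟨z, hz, hxz⟩ := Set.mem_iUnion₂.1 hx'
    exact h z hz (hWU hxz)⟩
  exact Set.disjoint_left.1 hVd (Set.mem_biUnion hxK hxy)
    (Set.mem_biUnion hy (refl_mem_uniformity hV))

open Classical in
theorem IsUniformlyExcisive.exists_isExcisionMap (h : IsUniformlyExcisive A B) (hW : W ∈ 𝓤 E) :
    ∃ V ∈ 𝓤 E, ∃ g, IsExcisionMap A B V W g := by
  obtain ⟨U, hU, hUsymm, hUW⟩ := comp_comp_symm_mem_uniformity_sets hW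
  obtain ⟨V, hV, hVU⟩ := h U hU
  choose! r hrmem hrU using fun x (hx : ∃ z ∈ A ∩ B, (x, z) ∈ U) ↦ hx
  set g : E → E := fun x ↦ if x ∉ B ∧ ∃ z ∈ A ∩ B, (x, z) ∈ U then r x else x with hg
  have hgU (x : E) : (x, g x) ∈ U := by
    by_cases hx : x ∉ B ∧ ∃ z ∈ A ∩ B, (x, z) ∈ U
    · simpa only [hg, if_pos hx] using hrU x hx.2
    · simpa only [hg, if_neg hx] using refl_mem_uniformity hU
  refine ⟨V ∩ U, Filter.inter_mem hV hU, g, fun x hx ↦ if_neg fun h ↦ h.1 hx, fun x hx ↦ ?_,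
    fun l hl hlA x hx ↦ ?_, fun S hS l hl ↦ ?_⟩
  · by_cases hx' : x ∉ B ∧ ∃ z ∈ A ∩ B, (x, z) ∈ U
    · simpa only [hg, if_pos hx'] using (hrmem x hx'.2).1
    · simpa only [hg, if_neg hx'] using hx
  · by_cases hxB : x ∈ B
    · simp only [hg, hxB, not_true_eq_false, false_and, if_false]
    · push Not at hlA
      obtain ⟨y, hy, hyA⟩ := hlA
      have hx' : x ∉ B ∧ ∃ z ∈ A ∩ B, (x, z) ∈ U :=
        ⟨hxB, hVU x ((hl.1 x hx).resolve_right hxB) y ((hl.1 y hy).resolve_left hyA)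
          (hl.2 x hx y hy).1⟩
      simpa only [hg, if_pos hx'] using (hrmem x hx'.2).2
  · have h_near : ∀ p ∈ l ++ l.map g, ∃ x ∈ l, (x, p) ∈ U := by
      simp only [List.forall_mem_append, List.forall_mem_map]
      exact ⟨fun x hx ↦ ⟨x, hx, refl_mem_uniformity hU⟩, fun x hx ↦ ⟨x, hx, hgU x⟩⟩
    refine ⟨List.forall_mem_append.2 ⟨hl.1, List.forall_mem_map.2 fun x hx ↦ hS (hl.1 x hx)⟩,
      fun p hp q hq ↦ ?_⟩
    obtain ⟨x, hx, hxp⟩ := h_near p hp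
    obtain ⟨y, hy, hyq⟩ := h_near q hq
    exact hUW ⟨y, ⟨x, hUsymm.symm _ _ hxp, (hl.2 x hx y hy).2⟩, hyq⟩

theorem IsExcisionMap.pullback_mem_vanishing_union (hg : IsExcisionMap A B V W g) (hV : V ∈ 𝓤 E)
    (hA : ∀ l : List E, l.length = n → IsSmall W A l → φ l = 0)
    (hB : ∀ l : List E, l.length = n → IsSmall W B l → φ l = 0) :
    pullback g φ ∈ vanishing n (A ∪ B) := by
  refine ⟨V, hV, fun l hn hl ↦ ?_⟩
  have hn' : (l.map g).length = n := by rw [List.length_map, hn]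
  exact (hg.isSmall_map hl).elim (hA _ hn') (hB _ hn')

theorem IsUniformlyExcisive.mem_coboundaries_union (h : IsUniformlyExcisive A B) {k : ℕ}
    (hA : φ ∈ vanishing (k + 1) A) (hB : φ ∈ vanishing (k + 1) B)
    (hd : coboundary φ ∈ vanishing (k + 2) (A ∪ B)) : φ ∈ coboundaries k (A ∪ B) A := by
  obtain ⟨U₁, hU₁, hA⟩ := hA
  obtain ⟨U₂, hU₂, hB⟩ := hB
  obtain ⟨U₃, hU₃, hd⟩ := hd
  obtain ⟨V, hV, g, hg⟩ :=
    h.exists_isExcisionMap (Filter.inter_mem hU₁ (Filter.inter_mem hU₂ hU₃))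
  have hsub : pullback id φ - pullback g φ ∈ coboundaries k (A ∪ B) A :=
    pullback_sub_pullback_mem_coboundaries_of_contiguous hV
      (fun l hn hl ↦ hA l hn (hl.mono Set.inter_subset_left subset_rfl))
      (fun l hn hl ↦ hd l hn <|
        hl.mono (Set.inter_subset_right.trans Set.inter_subset_right) subset_rfl)
      (by simpa only [List.map_id] using hg.isSmall_append A hg.mapsTo)
      (by simpa only [List.map_id] using hg.isSmall_append _ hg.mapsTo_union)
  have hpull : pullback g φ ∈ vanishing (k + 1) (A ∪ B) :=
    hg.pullback_mem_vanishing_union hV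
      (fun l hn hl ↦ hA l hn (hl.mono Set.inter_subset_left subset_rfl))
      (fun l hn hl ↦ hB l hn <|
        hl.mono (Set.inter_subset_right.trans Set.inter_subset_left) subset_rfl)
  simpa [pullback_id] using add_mem hsub (vanishing_le_coboundaries hpull)

theorem IsUniformlyExcisive.exists_mem_cocycles_union (h : IsUniformlyExcisive A B) {k : ℕ}
    (hφ : φ ∈ cocycles k B (A ∩ B)) :
    ∃ ψ ∈ cocycles k (A ∪ B) A, ψ - φ ∈ vanishing (k + 1) B := by
  obtain ⟨ψ, hψA, hψB⟩ := exists_mem_vanishing_sub_mem_vanishing hφ.1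
  have hdA : coboundary ψ ∈ vanishing (k + 2) A := coboundary_mem_vanishing hψA
  have hdB : coboundary ψ ∈ vanishing (k + 2) B := by
    simpa using add_mem (coboundary_mem_vanishing hψB) hφ.2
  obtain ⟨U₁, hU₁, hdA⟩ := hdA
  obtain ⟨U₂, hU₂, hdB⟩ := hdB
  obtain ⟨U₃, hU₃, hψA⟩ := hψA
  obtain ⟨V, hV, g, hg⟩ :=
    h.exists_isExcisionMap (Filter.inter_mem hU₁ (Filter.inter_mem hU₂ hU₃))
  refine ⟨pullback g ψ, mem_cocycles.2 ⟨⟨V, hV, fun l hn hl ↦ hψA _ ?_ ?_⟩, ?_⟩, ?_⟩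
  · rw [List.length_map, hn]
  · exact ((hg.isSmall_append A hg.mapsTo l hl).subset (List.subset_append_right _ _)).mono
      (Set.inter_subset_right.trans Set.inter_subset_right) subset_rfl
  · rw [coboundary_pullback]
    exact hg.pullback_mem_vanishing_union hV
      (fun l hn hl ↦ hdA l hn (hl.mono Set.inter_subset_left subset_rfl))
      (fun l hn hl ↦ hdB l hn <|
        hl.mono (Set.inter_subset_right.trans Set.inter_subset_left) subset_rfl)
  · have hgψ : pullback g ψ - ψ ∈ vanishing (k + 1) B := by
      simpa only [pullback_id] using pullback_sub_pullback_mem_vanishing hg.eqOn ψ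
    simpa using add_mem hgψ hψB

theorem IsUniformlyExcisive.restrict_bijective (h : IsUniformlyExcisive A B) (k : ℕ) :
    Function.Bijective (restrict k (Set.subset_union_right : B ⊆ A ∪ B)
      (Set.inter_subset_left : A ∩ B ⊆ A)) := by
  refine ⟨Subquotient.map_injective _ _ fun φ hφ hφB ↦ ?_,
    Subquotient.map_surjective _ _ fun φ hφ ↦ ?_⟩
  · obtain ⟨α, hα, β, hβ, rfl⟩ := mem_coboundaries.1 hφB
    obtain ⟨β', hβA, hβB⟩ := exists_mem_vanishing_sub_mem_vanishing hβ
    have h_union : α + coboundary β - coboundary β' ∈ coboundaries k (A ∪ B) A := by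
      refine h.mem_coboundaries_union (sub_mem hφ.1 (coboundary_mem_vanishing hβA)) ?_ ?_
      · simpa [sub_sub_eq_add_sub] using sub_mem hα (coboundary_mem_vanishing hβB)
      · simpa [coboundary_coboundary] using hφ.2
    simpa using add_mem h_union (coboundary_mem_coboundaries (A := A ∪ B) hβA)
  · obtain ⟨ψ, hψ, hψφ⟩ := h.exists_mem_cocycles_union hφ
    exact ⟨ψ, hψ, vanishing_le_coboundaries hψφ⟩

end Excision

section Cells

variable {E E' : Type*} [UniformSpace E] [UniformSpace E'] {A B C : Set E} {A' B' : Set E'} {n : ℕ}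

theorem IsCohomologyCell.of_bijective (h : IsCohomologyCell n A B)
    {f : ∀ k, Cohomology k A' B' →ₗ[ZMod 2] Cohomology k A B}
    (hf : ∀ k, Function.Bijective (f k)) : IsCohomologyCell n A' B' where
  finrank_eq_one := (LinearEquiv.ofBijective (f n) (hf n)).finrank_eq.trans h.finrank_eq_one
  subsingleton k hk := by
    have := h.subsingleton k hk
    exact (hf k).1.subsingleton

theorem IsCohomologyCell.of_bijective_symm (h : IsCohomologyCell n A B)
    {f : ∀ k, Cohomology k A B →ₗ[ZMod 2] Cohomology k A' B'}
    (hf : ∀ k, Function.Bijective (f k)) : IsCohomologyCell n A' B' :=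
  h.of_bijective fun k ↦ (LinearEquiv.ofBijective (f k) (hf k)).symm.bijective

theorem IsCohomologyCell.succ (h : IsCohomologyCell n B C) (hBA : B ⊆ A) (hCB : C ⊆ B)
    (hAC : ∀ k, Subsingleton (Cohomology k A C)) : IsCohomologyCell (n + 1) A B := by
  have hbij (k : ℕ) : Function.Bijective (connecting k A B C) := by
    refine ⟨(injective_iff_map_eq_zero _).2 fun x hx ↦ ?_, fun y ↦ ?_⟩
    · obtain ⟨y, rfl⟩ := (restrict_exact_connecting hBA hCB k x).1 hx
      rw [Subsingleton.elim y 0, map_zero]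
    · exact (connecting_exact_restrict hBA hCB k y).1 (Subsingleton.elim _ _)
  refine ⟨?_, fun k hk ↦ ?_⟩
  · rw [← (LinearEquiv.ofBijective _ (hbij n)).finrank_eq, h.finrank_eq_one]
  · cases k with
    | zero => exact (restrict_zero_injective hCB).subsingleton
    | succ k =>
      have := h.subsingleton k (by simpa using hk)
      exact (hbij k).2.subsingleton

theorem IsCohomologyCell.union (h : IsCohomologyCell n B (A ∩ B)) (hA : IsCompact A)
    (hB : IsClosed B) : IsCohomologyCell n (A ∪ B) A :=
  h.of_bijective (isUniformlyExcisive_of_isCompact hA hB).restrict_bijective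

end Cells

section EulerCharacteristic

open Module

variable {E : Type*} [UniformSpace E] {A B C : Set E} {n : ℕ}

/-- The total cohomology of the pair `(A, B)` is finite-dimensional. -/
structure HasFiniteCohomology (A B : Set E) : Prop where
  finite : ∀ k, Module.Finite (ZMod 2) (Cohomology k A B)
  eventually_subsingleton : ∀ᶠ k in Filter.atTop, Subsingleton (Cohomology k A B)

/-- The Euler characteristic of the pair `(A, B)`, meaningful when the pair has finite
cohomology. -/
noncomputable def eulerChar (A B : Set E) : ℤ :=
  ∑ᶠ k, (-1) ^ k * (finrank (ZMod 2) (Cohomology k A B) : ℤ)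

theorem eulerChar_eq_sum_range (h : ∀ k ≥ n, Subsingleton (Cohomology k A B)) :
    eulerChar A B =
      ∑ k ∈ Finset.range n, (-1) ^ k * (finrank (ZMod 2) (Cohomology k A B) : ℤ) := by
  refine finsum_eq_sum_of_support_subset _ fun k hk ↦ ?_
  by_contra hkn
  have := h k (by simpa using hkn)
  simp [finrank_zero_of_subsingleton] at hk

theorem IsCohomologyCell.hasFiniteCohomology (h : IsCohomologyCell n A B) :
    HasFiniteCohomology A B where
  finite k := by
    by_cases hk : k = n
    · subst hk
      exact finite_of_finrank_eq_succ h.finrank_eq_one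
    · have := h.subsingleton k hk
      infer_instance
  eventually_subsingleton := (Filter.eventually_gt_atTop n).mono fun k hk ↦ h.subsingleton k hk.ne'

theorem IsCohomologyCell.eulerChar_eq (h : IsCohomologyCell n A B) :
    eulerChar A B = (-1) ^ n := by
  rw [eulerChar, finsum_eq_single _ n, h.finrank_eq_one, Nat.cast_one, mul_one]
  intro k hk
  have := h.subsingleton k hk
  simp [finrank_zero_of_subsingleton]

theorem subsingleton_of_restrict (hBA : B ⊆ A) (hCB : C ⊆ B) {k : ℕ}
    (hAB : Subsingleton (Cohomology k A B)) (hBC : Subsingleton (Cohomology k B C)) :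
    Subsingleton (Cohomology k A C) := by
  refine subsingleton_of_forall_eq 0 fun x ↦ ?_
  obtain ⟨y, rfl⟩ := (restrict_exact_restrict hBA hCB k x).1 (Subsingleton.elim _ _)
  rw [Subsingleton.elim y 0, map_zero]

theorem HasFiniteCohomology.trans (hAB : HasFiniteCohomology A B) (hBC : HasFiniteCohomology B C)
    (hBA : B ⊆ A) (hCB : C ⊆ B) : HasFiniteCohomology A C where
  finite k := by
    have := hAB.finite
    have := hBC.finite
    exact finiteDimensional_of_exact (K := ZMod 2) (X := (Cohomology · A B))
      (Y := (Cohomology · A C)) (Z := (Cohomology · B C)) (restrict_exact_restrict hBA hCB) k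
  eventually_subsingleton := by
    filter_upwards [hAB.eventually_subsingleton, hBC.eventually_subsingleton] with k
    exact subsingleton_of_restrict hBA hCB

theorem eulerChar_eq_add (hAB : HasFiniteCohomology A B) (hBC : HasFiniteCohomology B C)
    (hBA : B ⊆ A) (hCB : C ⊆ B) : eulerChar A C = eulerChar A B + eulerChar B C := by
  have hAC := hAB.trans hBC hBA hCB
  obtain ⟨n, hn⟩ := Filter.eventually_atTop.1 <| hAB.eventually_subsingleton.and <|
    hBC.eventually_subsingleton.and hAC.eventually_subsingleton
  have := hAB.finite
  have := hBC.finite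
  rw [eulerChar_eq_sum_range fun k hk ↦ (hn k hk).1,
    eulerChar_eq_sum_range fun k hk ↦ (hn k hk).2.1,
    eulerChar_eq_sum_range fun k hk ↦ (hn k hk).2.2]
  have hsum := sum_neg_one_pow_finrank_of_exact
    (K := ZMod 2) (X := (Cohomology · A B)) (Y := (Cohomology · A C)) (Z := (Cohomology · B C))
    (restrict_zero_injective hCB)
    (restrict_exact_restrict hBA hCB) (restrict_exact_connecting hBA hCB)
    (connecting_exact_restrict hBA hCB) n
  have := (hn n le_rfl).1
  rwa [finrank_zero_of_subsingleton, Nat.cast_zero, mul_zero, add_zero] at hsum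

theorem subsingleton_self (A : Set E) (k : ℕ) : Subsingleton (Cohomology k A A) :=
  subsingleton_of_deformation (h := Prod.snd)
    ⟨uniformContinuous_snd.uniformContinuousOn, fun _ hx ↦ hx.2, fun _ hx ↦ hx.2⟩ subset_rfl
    (fun _ _ ↦ rfl) (fun _ hx ↦ hx) k

theorem HasFiniteCohomology.refl (A : Set E) : HasFiniteCohomology A A where
  finite k := by
    have := subsingleton_self A k
    infer_instance
  eventually_subsingleton := .of_forall (subsingleton_self A)

theorem eulerChar_self (A : Set E) : eulerChar A A = 0 :=
  (eulerChar_eq_sum_range (n := 0) fun k _ ↦ subsingleton_self A k).trans (Finset.sum_range_zero _)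

end EulerCharacteristic

end AlexanderSpanier

/-! ### Balls and spheres -/

namespace AlexanderSpanier

open Metric
open scoped unitInterval

theorem IsPairMap.of_isCompact {E E' : Type*} [UniformSpace E] [UniformSpace E'] {f : E → E'}
    {A B : Set E} {A' B' : Set E'} (hA : IsCompact A) (hf : ContinuousOn f A)
    (hAA' : Set.MapsTo f A A') (hBB' : Set.MapsTo f B B') : IsPairMap f A B A' B' :=
  ⟨hA.uniformContinuousOn_of_continuous hf, hAA', hBB'⟩

section Hemispheres

variable {V : Type*} [NormedAddCommGroup V] {x : WithLp 2 (ℝ × V)} {n : ℕ}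

/-- The height above `v` of the upper unit hemisphere of `ℝ × V`. -/
noncomputable def height (v : V) : ℝ := √(1 - ‖v‖ ^ 2)

/-- The upper closed hemisphere of the unit sphere of `ℝ × V`. -/
def upperHemisphere (V : Type*) [NormedAddCommGroup V] : Set (WithLp 2 (ℝ × V)) :=
  sphere 0 1 ∩ {x | 0 ≤ x.fst}

/-- The lower closed hemisphere of the unit sphere of `ℝ × V`. -/
def lowerHemisphere (V : Type*) [NormedAddCommGroup V] : Set (WithLp 2 (ℝ × V)) :=
  sphere 0 1 ∩ {x | x.fst ≤ 0}

@[fun_prop]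
theorem continuous_height : Continuous (height : V → ℝ) := by
  unfold height
  fun_prop

theorem mem_closedBall_prod : x ∈ closedBall 0 1 ↔ x.fst ^ 2 + ‖x.snd‖ ^ 2 ≤ 1 := by
  rw [mem_closedBall_zero_iff, ← sq_le_one_iff₀ (norm_nonneg x), WithLp.prod_norm_sq_eq_of_L2,
    Real.norm_eq_abs, sq_abs]

theorem mem_sphere_prod : x ∈ sphere 0 1 ↔ x.fst ^ 2 + ‖x.snd‖ ^ 2 = 1 := by
  rw [mem_sphere_zero_iff_norm, ← pow_eq_one_iff_of_nonneg (norm_nonneg x) two_ne_zero,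
    WithLp.prod_norm_sq_eq_of_L2, Real.norm_eq_abs, sq_abs]

theorem height_sq {v : V} (hv : v ∈ closedBall 0 1) : height v ^ 2 = 1 - ‖v‖ ^ 2 := by
  rw [mem_closedBall_zero_iff] at hv
  exact Real.sq_sqrt (by nlinarith [norm_nonneg v])

theorem snd_mem_closedBall (hx : x ∈ closedBall 0 1) : x.snd ∈ closedBall 0 1 := by
  rw [mem_closedBall_prod] at hx
  rw [mem_closedBall_zero_iff, ← sq_le_one_iff₀ (norm_nonneg _)]
  nlinarith [sq_nonneg x.fst]

theorem fst_mem_Icc_height (hx : x ∈ closedBall 0 1) :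
    x.fst ∈ Set.Icc (-height x.snd) (height x.snd) := by
  rw [mem_closedBall_prod] at hx
  exact abs_le.1 (Real.abs_le_sqrt (by linarith))

theorem fst_eq_height (hx : x ∈ upperHemisphere V) : x.fst = height x.snd := by
  rw [height, ← mem_sphere_prod.1 hx.1, add_sub_cancel_right, Real.sqrt_sq hx.2]

theorem fst_eq_neg_height (hx : x ∈ lowerHemisphere V) : x.fst = -height x.snd := by
  rw [height, ← mem_sphere_prod.1 hx.1, add_sub_cancel_right, Real.sqrt_sq_eq_abs,
    abs_of_nonpos hx.2, neg_neg]

theorem toLp_mem_closedBall {r : ℝ} {v : V} (hv : v ∈ closedBall 0 1)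
    (hr : r ∈ Set.Icc (-height v) (height v)) :
    WithLp.toLp 2 (r, v) ∈ closedBall (0 : WithLp 2 (ℝ × V)) 1 := by
  rw [mem_closedBall_prod]
  exact le_sub_iff_add_le.1 ((sq_le_sq' hr.1 hr.2).trans_eq (height_sq hv))

theorem toLp_height_mem {v : V} (hv : v ∈ closedBall 0 1) :
    WithLp.toLp 2 (height v, v) ∈ upperHemisphere V := by
  refine ⟨mem_sphere_prod.2 ?_, Real.sqrt_nonneg _⟩
  exact (congrArg (· + ‖v‖ ^ 2) (height_sq hv)).trans (sub_add_cancel _ _)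

theorem toLp_neg_height_mem {v : V} (hv : v ∈ closedBall 0 1) :
    WithLp.toLp 2 (-height v, v) ∈ lowerHemisphere V := by
  refine ⟨mem_sphere_prod.2 ?_, neg_nonpos.2 (Real.sqrt_nonneg _)⟩
  exact (congrArg (· + ‖v‖ ^ 2) ((neg_sq _).trans (height_sq hv))).trans (sub_add_cancel _ _)

theorem lowerHemisphere_union_upperHemisphere :
    lowerHemisphere V ∪ upperHemisphere V = sphere 0 1 := by
  rw [lowerHemisphere, upperHemisphere, ← Set.inter_union_distrib_left, Set.inter_eq_left]
  exact fun x _ ↦ le_total x.fst 0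

theorem lowerHemisphere_subset_closedBall : lowerHemisphere V ⊆ closedBall 0 1 :=
  Set.inter_subset_left.trans sphere_subset_closedBall

theorem upperHemisphere_subset_closedBall : upperHemisphere V ⊆ closedBall 0 1 :=
  Set.inter_subset_left.trans sphere_subset_closedBall

variable [NormedSpace ℝ V] [FiniteDimensional ℝ V]

theorem isCompact_upperHemisphere : IsCompact (upperHemisphere V) :=
  (isCompact_sphere 0 1).inter_right
    (isClosed_le continuous_const (by fun_prop : Continuous fun x : WithLp 2 (ℝ × V) ↦ x.fst))

theorem isCompact_lowerHemisphere : IsCompact (lowerHemisphere V) :=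
  (isCompact_sphere 0 1).inter_right
    (isClosed_le (by fun_prop : Continuous fun x : WithLp 2 (ℝ × V) ↦ x.fst) continuous_const)

theorem subsingleton_cohomology_lowerHemisphere (k : ℕ) :
    Subsingleton (Cohomology k (closedBall 0 1) (lowerHemisphere V)) := by
  refine subsingleton_of_deformation (h := fun p ↦ WithLp.toLp 2
    ((1 - p.1) * p.2.fst + p.1 * -height p.2.snd, p.2.snd)) (.of_isCompact
      (isCompact_Icc.prod (isCompact_closedBall 0 1)) (by fun_prop) ?_ ?_)
      lowerHemisphere_subset_closedBall ?_ ?_ k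
  · rintro ⟨t, x⟩ ⟨ht, hx⟩
    have hIcc := fst_mem_Icc_height hx
    exact toLp_mem_closedBall (snd_mem_closedBall hx) <| convex_Icc _ _ hIcc
      (Set.left_mem_Icc.2 (hIcc.1.trans hIcc.2)) (sub_nonneg.2 ht.2) ht.1 (sub_add_cancel _ _)
  · rintro ⟨t, x⟩ ⟨-, hx⟩
    simp only [fst_eq_neg_height hx, ← add_mul, sub_add_cancel, one_mul]
    exact toLp_neg_height_mem (snd_mem_closedBall (lowerHemisphere_subset_closedBall hx))
  · intro x _
    simp only [sub_zero, one_mul, zero_mul, add_zero]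
    rfl
  · intro x hx
    simpa using toLp_neg_height_mem (snd_mem_closedBall hx)

theorem isPairMap_snd : IsPairMap (fun x : WithLp 2 (ℝ × V) ↦ x.snd) (upperHemisphere V)
    (lowerHemisphere V ∩ upperHemisphere V) (closedBall 0 1) (sphere 0 1) := by
  refine .of_isCompact isCompact_upperHemisphere (by fun_prop)
    (fun x hx ↦ snd_mem_closedBall (upperHemisphere_subset_closedBall hx)) fun x hx ↦ ?_
  have hx₀ : x.fst = 0 := le_antisymm hx.1.2 hx.2.2
  have hx₁ := mem_sphere_prod.1 hx.1.1
  rw [hx₀, zero_pow two_ne_zero, zero_add,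
    pow_eq_one_iff_of_nonneg (norm_nonneg _) two_ne_zero] at hx₁
  exact mem_sphere_zero_iff_norm.2 hx₁

theorem isPairMap_toLp_height : IsPairMap (fun v : V ↦ WithLp.toLp 2 (height v, v))
    (closedBall 0 1) (sphere 0 1) (upperHemisphere V)
    (lowerHemisphere V ∩ upperHemisphere V) := by
  refine .of_isCompact (isCompact_closedBall 0 1) (by fun_prop) (fun v ↦ toLp_height_mem)
    fun v hv ↦ ⟨?_, toLp_height_mem (sphere_subset_closedBall hv)⟩
  have hv₀ : height v = 0 := by simp [height, mem_sphere_zero_iff_norm.1 hv]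
  have hlow := toLp_neg_height_mem (sphere_subset_closedBall hv)
  rwa [hv₀, neg_zero, ← hv₀] at hlow

theorem IsCohomologyCell.upperHemisphere
    (h : IsCohomologyCell n (closedBall (0 : V) 1) (sphere 0 1)) :
    IsCohomologyCell n (upperHemisphere V) (lowerHemisphere V ∩ upperHemisphere V) := by
  refine h.of_bijective_symm fun k ↦ isPairMap_snd.inducedMap_bijective isPairMap_toLp_height
    Set.inter_subset_right sphere_subset_closedBall (fun x hx ↦ ?_) (fun _ _ ↦ rfl) k
  simp only [← fst_eq_height hx]
  rfl

theorem IsCohomologyCell.closedBall_prod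
    (h : IsCohomologyCell n (closedBall (0 : V) 1) (sphere 0 1)) :
    IsCohomologyCell (n + 1) (closedBall (0 : WithLp 2 (ℝ × V)) 1) (sphere 0 1) := by
  have hcell : IsCohomologyCell n (sphere (0 : WithLp 2 (ℝ × V)) 1) (lowerHemisphere V) := by
    rw [← lowerHemisphere_union_upperHemisphere]
    exact h.upperHemisphere.union isCompact_lowerHemisphere isCompact_upperHemisphere.isClosed
  exact hcell.succ sphere_subset_closedBall Set.inter_subset_left
    subsingleton_cohomology_lowerHemisphere

end Hemispheres

section InnerProductSpace

variable {V : Type*} [NormedAddCommGroup V] [InnerProductSpace ℝ V] [FiniteDimensional ℝ V]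

theorem IsCohomologyCell.closedBall_of_finrank_eq {W : Type*} [NormedAddCommGroup W]
    [InnerProductSpace ℝ W] [FiniteDimensional ℝ W] {n : ℕ}
    (h : IsCohomologyCell n (closedBall (0 : V) 1) (sphere 0 1))
    (hVW : Module.finrank ℝ V = Module.finrank ℝ W) :
    IsCohomologyCell n (closedBall (0 : W) 1) (sphere 0 1) := by
  let e : W ≃ₗᵢ[ℝ] V :=
    (stdOrthonormalBasis ℝ W).equiv (stdOrthonormalBasis ℝ V) (finCongr hVW.symm)
  refine h.of_bijective_symm fun k ↦ IsPairMap.inducedMap_bijective (f := e) (g := e.symm)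
    (.of_isCompact (isCompact_closedBall 0 1) (by fun_prop) ?_ ?_)
    (.of_isCompact (isCompact_closedBall 0 1) (by fun_prop) ?_ ?_) sphere_subset_closedBall
    sphere_subset_closedBall (fun x _ ↦ e.symm_apply_apply x) (fun x _ ↦ e.apply_symm_apply x) k
  all_goals intro x hx; simpa using hx

theorem isCohomologyCell_closedBall_euclideanSpace (n : ℕ) :
    IsCohomologyCell n (closedBall (0 : EuclideanSpace ℝ (Fin n)) 1) (sphere 0 1) := by
  induction n with
  | zero =>
    rw [sphere_eq_empty_of_subsingleton one_ne_zero]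
    exact isCohomologyCell_zero_of_contraction (h := fun p ↦ p.2)
      (.of_isCompact (isCompact_Icc.prod (isCompact_closedBall 0 1)) (by fun_prop)
        (fun p hp ↦ hp.2) fun p hp ↦ hp.2) (mem_closedBall_self zero_le_one) (fun _ _ ↦ rfl)
      fun _ _ ↦ Subsingleton.elim _ _
  | succ n ih =>
    refine ih.closedBall_prod.closedBall_of_finrank_eq ?_
    rw [(WithLp.linearEquiv 2 ℝ _).finrank_eq]
    simp [add_comm]

theorem isCohomologyCell_closedBall_sphere :
    IsCohomologyCell (Module.finrank ℝ V) (closedBall (0 : V) 1) (sphere 0 1) :=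
  (isCohomologyCell_closedBall_euclideanSpace _).closedBall_of_finrank_eq
    finrank_euclideanSpace_fin

end InnerProductSpace

end AlexanderSpanier

/-! ### Brouwer's fixed point theorem and invariance of domain -/

namespace AlexanderSpanier

open Metric MeasureTheory
open scoped Topology unitInterval RealInnerProductSpace

section Exit

variable {V : Type*} [NormedAddCommGroup V] [InnerProductSpace ℝ V] {x u : V}

/-- The parameter at which the ray from the point `x` of the unit ball in the direction `u` leaves
the ball: the larger root of the quadratic equation `‖x + t • u‖ ^ 2 = 1`. -/
noncomputable def exitTime (x u : V) : ℝ :=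
  (-⟪x, u⟫ + √(⟪x, u⟫ ^ 2 + ‖u‖ ^ 2 * (1 - ‖x‖ ^ 2))) / ‖u‖ ^ 2

theorem norm_add_exitTime_smul (hx : ‖x‖ ≤ 1) (hu : u ≠ 0) : ‖x + exitTime x u • u‖ = 1 := by
  have hu' : ‖u‖ ^ 2 ≠ 0 := by simpa using hu
  have hd : 0 ≤ ⟪x, u⟫ ^ 2 + ‖u‖ ^ 2 * (1 - ‖x‖ ^ 2) :=
    add_nonneg (sq_nonneg _) (mul_nonneg (sq_nonneg _) (by nlinarith [norm_nonneg x]))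
  have hroot : (exitTime x u * ‖u‖ ^ 2 + ⟪x, u⟫) ^ 2 =
      ⟪x, u⟫ ^ 2 + ‖u‖ ^ 2 * (1 - ‖x‖ ^ 2) := by
    rw [exitTime, div_mul_cancel₀ _ hu', neg_add_cancel_comm, Real.sq_sqrt hd]
  rw [← pow_eq_one_iff_of_nonneg (norm_nonneg _) two_ne_zero, norm_add_sq_real, norm_smul,
    inner_smul_right, mul_pow, Real.norm_eq_abs, sq_abs]
  refine mul_left_cancel₀ hu' ?_
  linear_combination hroot

theorem exitTime_eq_zero (hx : ‖x‖ = 1) (hu : 0 ≤ ⟪x, u⟫) : exitTime x u = 0 := by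
  simp [exitTime, hx, Real.sqrt_sq hu]

theorem continuousOn_exitTime {X : Type*} [TopologicalSpace X] {f g : X → V} {s : Set X}
    (hf : ContinuousOn f s) (hg : ContinuousOn g s) (hg₀ : ∀ x ∈ s, g x ≠ 0) :
    ContinuousOn (fun x ↦ exitTime (f x) (g x)) s := by
  refine ContinuousOn.div ?_ (hg.norm.pow 2) fun x hx ↦ by simpa using hg₀ x hx
  have := hf.inner hg (𝕜 := ℝ)
  fun_prop

end Exit

section RadialPush

variable {V : Type*} [NormedAddCommGroup V] [NormedSpace ℝ V] {c y : V} {ε : ℝ}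

/-- The radial retraction of the complement of `c` onto the complement of the open ball of
radius `ε` about `c`. -/
noncomputable def radialPush (c : V) (ε : ℝ) (y : V) : V :=
  c + max (ε / ‖y - c‖) 1 • (y - c)

theorem continuousOn_radialPush : ContinuousOn (radialPush c ε) {c}ᶜ := by
  have hne : ∀ y ∈ ({c}ᶜ : Set V), ‖y - c‖ ≠ 0 := fun y hy ↦ by simpa [sub_eq_zero] using hy
  have hdiv : ContinuousOn (fun y : V ↦ ε / ‖y - c‖) {c}ᶜ :=
    continuousOn_const.div (by fun_prop) hne
  exact continuousOn_const.add
    ((hdiv.sup continuousOn_const).smul (continuousOn_id.sub continuousOn_const))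

theorem radialPush_of_le (hy : y ≠ c) (h : ε ≤ ‖y - c‖) : radialPush c ε y = y := by
  rw [radialPush, max_eq_right ((div_le_one (norm_sub_pos_iff.2 hy)).2 h), one_smul,
    add_sub_cancel]

theorem radialPush_mem_sphere (hε : 0 ≤ ε) (hy : y ≠ c) (h : ‖y - c‖ ≤ ε) :
    radialPush c ε y ∈ sphere c ε := by
  have hpos := norm_sub_pos_iff.2 hy
  rw [radialPush, max_eq_left ((one_le_div hpos).2 h), mem_sphere_iff_norm, add_sub_cancel_left,
    norm_smul, norm_div, norm_norm, Real.norm_of_nonneg hε, div_mul_cancel₀ _ hpos.ne']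

end RadialPush

section Brouwer

variable {V : Type*} [NormedAddCommGroup V] [InnerProductSpace ℝ V] [FiniteDimensional ℝ V]

variable (V) in
theorem not_exists_retraction_closedBall_sphere :
    ¬∃ r : V → V, ContinuousOn r (closedBall 0 1) ∧ Set.MapsTo r (closedBall 0 1) (sphere 0 1) ∧
      ∀ x ∈ sphere 0 1, r x = x := by
  rintro ⟨r, hr, hmaps, hfix⟩
  have hsub : sphere (0 : V) 1 ⊆ closedBall 0 1 := sphere_subset_closedBall
  have hcont : ContinuousOn (fun p : ℝ × V ↦ (1 - p.1) • p.2 + p.1 • r p.2)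
      (I ×ˢ closedBall 0 1) := by
    have := hr.comp (continuousOn_snd (s := I ×ˢ closedBall 0 1)) fun p hp ↦ hp.2
    exact ((continuousOn_const.sub continuousOn_fst).smul continuousOn_snd).add
      (continuousOn_fst.smul this)
  have := subsingleton_of_deformation (.of_isCompact
    (isCompact_Icc.prod (isCompact_closedBall 0 1)) hcont
    (fun p hp ↦ convex_closedBall 0 1 hp.2 (hsub (hmaps hp.2)) (sub_nonneg.2 hp.1.2) hp.1.1
      (sub_add_cancel _ _))
    fun p hp ↦ by simpa [hfix p.2 hp.2, ← add_smul] using hp.2)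
    hsub (fun x _ ↦ by simp) (fun x hx ↦ by simpa using hmaps hx) (Module.finrank ℝ V)
  have hcell := (isCohomologyCell_closedBall_sphere (V := V)).finrank_eq_one
  rw [Module.finrank_zero_of_subsingleton] at hcell
  exact zero_ne_one hcell

theorem exists_fixedPoint_closedBall {f : V → V} (hf : ContinuousOn f (closedBall 0 1))
    (hmaps : Set.MapsTo f (closedBall 0 1) (closedBall 0 1)) : ∃ x ∈ closedBall 0 1, f x = x := by
  by_contra! hne
  have hne' : ∀ x ∈ closedBall 0 1, x - f x ≠ 0 := fun x hx h ↦ hne x hx (sub_eq_zero.1 h).symm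
  have hsub : ContinuousOn (fun x ↦ x - f x) (closedBall 0 1) := continuousOn_id.sub hf
  refine not_exists_retraction_closedBall_sphere V
    ⟨fun x ↦ x + exitTime x (x - f x) • (x - f x),
      continuousOn_id.add ((continuousOn_exitTime continuousOn_id hsub hne').smul hsub),
      fun x hx ↦ ?_, fun x hx ↦ ?_⟩
  · exact mem_sphere_zero_iff_norm.2
      (norm_add_exitTime_smul (mem_closedBall_zero_iff.1 hx) (hne' x hx))
  · have hx₁ := mem_sphere_zero_iff_norm.1 hx
    have hinner : ⟪x, f x⟫ ≤ 1 := (real_inner_le_norm x (f x)).trans <| by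
      simpa [hx₁] using hmaps (sphere_subset_closedBall hx)
    have hexit : exitTime x (x - f x) = 0 := exitTime_eq_zero hx₁ <| by
      rw [inner_sub_right, real_inner_self_eq_norm_sq, hx₁]
      linarith
    simp only [hexit, zero_smul, add_zero]

end Brouwer

section InvarianceOfDomain

variable {V : Type*} [NormedAddCommGroup V] [InnerProductSpace ℝ V] [FiniteDimensional ℝ V]
  {f G : V → V} {K : Set V} {c : V} {ε : ℝ}

theorem exists_eq_zero_of_norm_sub_le_one {H : V → V} (hf : ContinuousOn f (closedBall 0 1))
    (hG : Set.LeftInvOn G f (closedBall 0 1)) (hH : ContinuousOn H (f '' closedBall 0 1))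
    (hGH : ∀ y ∈ f '' closedBall 0 1, ‖H y - G y‖ ≤ 1) : ∃ y ∈ f '' closedBall 0 1, H y = 0 := by
  obtain ⟨x, hx, hfx⟩ := exists_fixedPoint_closedBall (f := fun x ↦ x - H (f x))
    (continuousOn_id.sub (hH.comp hf fun x ↦ Set.mem_image_of_mem f)) fun x hx ↦ by
      simpa [hG hx, norm_sub_rev] using hGH (f x) (Set.mem_image_of_mem f hx)
  exact ⟨f x, Set.mem_image_of_mem f hx, by simpa using hfx⟩

theorem exists_continuous_norm_sub_lt_ne_zero_on_sphere (hG : Continuous G) {δ : ℝ} (hδ : 0 < δ)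
    (hε : ε ≠ 0) :
    ∃ P : V → V, Continuous P ∧ (∀ y, ‖P y - G y‖ < δ) ∧ ∀ y ∈ sphere c ε, P y ≠ 0 := by
  borelize V
  obtain ⟨P, hP, hPG, -⟩ := hG.exists_contDiff_approx 1 (continuous_const (y := δ / 2))
    fun _ ↦ half_pos hδ
  -- The image of a sphere under a differentiable map is null, so `P` avoids a small value on it.
  have hnull : volume (P '' sphere c ε) = 0 :=
    addHaar_image_eq_zero_of_differentiableOn_of_addHaar_eq_zero _
      (hP.differentiable one_ne_zero).differentiableOn (Measure.addHaar_sphere_of_ne_zero _ _ hε)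
  obtain ⟨v, hv, hvP⟩ : (ball (0 : V) (δ / 2) \ P '' sphere c ε).Nonempty := by
    rw [Set.sdiff_nonempty]
    exact fun h ↦ (measure_ball_pos volume (0 : V) (half_pos hδ)).ne' (measure_mono_null h hnull)
  refine ⟨fun y ↦ P y - v, hP.continuous.sub continuous_const, fun y ↦ ?_,
    fun y hy h ↦ hvP ⟨y, hy, sub_eq_zero.1 h⟩⟩
  calc ‖P y - v - G y‖ = ‖P y - G y - v‖ := by rw [sub_right_comm]
    _ ≤ ‖P y - G y‖ + ‖v‖ := norm_sub_le _ _
    _ < δ / 2 + δ / 2 := add_lt_add (by simpa [dist_eq_norm] using hPG y)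
      (mem_ball_zero_iff.1 hv)
    _ = δ := add_halves δ

theorem exists_continuousOn_norm_sub_le_one_ne_zero (hG : Continuous G) (hK : IsCompact K)
    (hc : c ∉ K) (hε : 0 < ε) (hGc : ∀ y ∈ closedBall c ε, ‖G y‖ ≤ 1 / 4)
    (hGK : ∀ y ∈ K, ε ≤ ‖y - c‖ → G y ≠ 0) :
    ∃ H : V → V, ContinuousOn H K ∧ (∀ y ∈ K, ‖H y - G y‖ ≤ 1) ∧ ∀ y ∈ K, H y ≠ 0 := by
  obtain ⟨δ, hδ, hGδ⟩ := (hK.inter_right (isClosed_le continuous_const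
    (by fun_prop : Continuous fun y ↦ ‖y - c‖))).exists_forall_le' (a := 0)
    hG.norm.continuousOn fun y hy ↦ norm_pos_iff.2 (hGK y hy.1 hy.2)
  obtain ⟨P, hP, hPG, hP₀⟩ := exists_continuous_norm_sub_lt_ne_zero_on_sphere (c := c) hG
    (lt_min hδ (by norm_num : (0 : ℝ) < 1 / 4)) hε.ne'
  have hne : ∀ y ∈ K, y ≠ c := fun y hy h ↦ hc (h ▸ hy)
  refine ⟨fun y ↦ P (radialPush c ε y),
    hP.comp_continuousOn (continuousOn_radialPush.mono hne), fun y hy ↦ ?_, fun y hy ↦ ?_⟩ <;>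
  rcases le_total ε ‖y - c‖ with h | h
  · simp only [radialPush_of_le (hne y hy) h]
    linarith [hPG y, min_le_right δ (1 / 4)]
  · have hpush := radialPush_mem_sphere hε.le (hne y hy) h
    calc ‖P (radialPush c ε y) - G y‖
        ≤ ‖P (radialPush c ε y) - G (radialPush c ε y)‖ + ‖G (radialPush c ε y) - G y‖ :=
          norm_sub_le_norm_sub_add_norm_sub ..
      _ ≤ 1 / 4 + (1 / 4 + 1 / 4) := by
        gcongr
        · exact (hPG _).le.trans (min_le_right _ _)
        · exact (norm_sub_le _ _).trans (add_le_add (hGc _ (sphere_subset_closedBall hpush))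
            (hGc y (mem_closedBall_iff_norm.2 h)))
      _ ≤ 1 := by norm_num
  · simp only [radialPush_of_le (hne y hy) h]
    intro hPy
    have := hPG y
    rw [hPy, zero_sub, norm_neg] at this
    exact (this.trans_le (min_le_left _ _)).not_ge (hGδ y ⟨hy, h⟩)
  · exact hP₀ _ (radialPush_mem_sphere hε.le (hne y hy) h)

theorem exists_continuous_leftInvOn (hf : ContinuousOn f K) (hK : IsCompact K)
    (hinj : Set.InjOn f K) : ∃ G : V → V, Continuous G ∧ Set.LeftInvOn G f K := by
  have := isCompact_iff_compactSpace.1 hK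
  have hemb : Topology.IsClosedEmbedding (K.domRestrict f) :=
    (continuousOn_iff_continuous_domRestrict.1 hf).isClosedEmbedding hinj.injective
  obtain ⟨G, hG⟩ := ContinuousMap.exists_extension hemb ⟨Subtype.val, continuous_subtype_val⟩
  exact ⟨G, G.continuous, fun x hx ↦ congrArg (· ⟨x, hx⟩) hG⟩

-- Following Tao: if `f 0` were not interior, one could perturb a left inverse of `f` near a point
-- `c` outside the image so as to make it zero-free, contradicting Brouwer's theorem.
theorem image_closedBall_mem_nhds (hf : ContinuousOn f (closedBall 0 1))
    (hinj : Set.InjOn f (closedBall 0 1)) : f '' closedBall 0 1 ∈ 𝓝 (f 0) := by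
  have hcompact := isCompact_closedBall (0 : V) 1
  have h₀ : (0 : V) ∈ closedBall 0 1 := mem_closedBall_self zero_le_one
  obtain ⟨G, hG, hGf⟩ := exists_continuous_leftInvOn hf hcompact hinj
  obtain ⟨r, hr, hGr⟩ : ∃ r > 0, ∀ y ∈ ball (f 0) r, ‖G y‖ ≤ 1 / 4 := by
    obtain ⟨r, hr, h⟩ := Metric.continuous_iff.1 hG (f 0) (1 / 4) (by norm_num)
    exact ⟨r, hr, fun y hy ↦ by simpa [hGf h₀] using (h y hy).le⟩
  by_contra hnhds
  obtain ⟨c, hcr, hc⟩ : ∃ c ∈ ball (f 0) (r / 3), c ∉ f '' closedBall 0 1 :=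
    Set.not_subset.1 fun h ↦ hnhds (Filter.mem_of_superset (ball_mem_nhds _ (by positivity)) h)
  obtain ⟨H, hH, hGH, hH₀⟩ := exists_continuousOn_norm_sub_le_one_ne_zero hG
    (hcompact.image_of_continuousOn hf) hc (by positivity : 0 < r / 3)
    (fun y hy ↦ hGr y <| by
      rw [mem_ball] at hcr ⊢
      linarith [dist_triangle y c (f 0), mem_closedBall.1 hy]) <| by
    rintro _ ⟨x, hx, rfl⟩ hle hGx
    rw [hGf hx] at hGx
    rw [hGx, ← dist_eq_norm, dist_comm] at hle
    exact hle.not_gt hcr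
  obtain ⟨y, hy, hHy⟩ := exists_eq_zero_of_norm_sub_le_one hf hGf hH hGH
  exact hH₀ y hy hHy

theorem isOpen_image_of_injOn {U : Set V} (hU : IsOpen U) (hf : ContinuousOn f U)
    (hinj : Set.InjOn f U) : IsOpen (f '' U) := by
  refine isOpen_iff_mem_nhds.2 (Set.forall_mem_image.2 fun x hx ↦ ?_)
  obtain ⟨r, hr, hrU⟩ := nhds_basis_closedBall.mem_iff.1 (hU.mem_nhds hx)
  have hmaps : Set.MapsTo (fun y ↦ x + r • y) (closedBall 0 1) U := fun y hy ↦ hrU <| by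
    simpa [norm_smul, abs_of_pos hr] using
      mul_le_of_le_one_right hr.le (mem_closedBall_zero_iff.1 hy)
  have hinj' : Function.Injective fun y ↦ x + r • y :=
    (add_right_injective x).comp (smul_right_injective V hr.ne')
  have hnhds := image_closedBall_mem_nhds (f := fun y ↦ f (x + r • y))
    (hf.comp (by fun_prop) hmaps) (hinj.comp hinj'.injOn hmaps)
  rw [smul_zero, add_zero] at hnhds
  refine Filter.mem_of_superset hnhds ?_
  rintro _ ⟨y, hy, rfl⟩
  exact Set.mem_image_of_mem f (hmaps hy)

theorem finrank_le_of_injOn {W : Type*} [NormedAddCommGroup W] [InnerProductSpace ℝ W]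
    [FiniteDimensional ℝ W] {f : V → W} {U : Set V} (hU : IsOpen U) (hne : U.Nonempty)
    (hf : ContinuousOn f U) (hinj : Set.InjOn f U) : Module.finrank ℝ V ≤ Module.finrank ℝ W := by
  by_contra! hlt
  obtain ⟨L, hL⟩ := (finrank_le_iff_exists_linearMap (R := ℝ)).1 hlt.le
  have hopen : IsOpen ((fun x ↦ L (f x)) '' U) := isOpen_image_of_injOn hU
    (L.continuous_of_finiteDimensional.comp_continuousOn hf) (hL.comp_injOn hinj)
  have htop : LinearMap.range L = ⊤ := Submodule.eq_top_of_nonempty_interior' _ <|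
    (hne.image _).mono <| interior_maximal (Set.image_subset_iff.2 fun x _ ↦ ⟨f x, rfl⟩) hopen
  refine hlt.not_ge ?_
  rw [← finrank_top ℝ V, ← htop]
  exact LinearMap.finrank_range_le L

end InvarianceOfDomain

section Sphere

variable {V W : Type*} [NormedAddCommGroup V] [InnerProductSpace ℝ V] [NormedAddCommGroup W]
  [InnerProductSpace ℝ W] {n : ℕ}

theorem exists_chart_sphere (hn : Module.finrank ℝ V = n + 1) {y : V}
    (hy : y ∈ sphere 0 1) : ∃ g : EuclideanSpace ℝ (Fin n) → V,
      Continuous g ∧ Function.Injective g ∧ (∀ z, g z ∈ sphere 0 1) ∧ y ∈ Set.range g := by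
  have : Fact (Module.finrank ℝ V = n + 1) := ⟨hn⟩
  set s := stereographic' n (-(⟨y, hy⟩ : sphere (0 : V) 1))
  have htarget : s.target = Set.univ := stereographic'_target _
  have hsource : ⟨y, hy⟩ ∈ s.source := by
    rw [stereographic'_source]
    exact ne_neg_of_mem_unit_sphere ℝ _
  refine ⟨fun z ↦ s.symm z, continuous_subtype_val.comp ?_, fun z z' h ↦ ?_,
    fun z ↦ (s.symm z).2, s ⟨y, hy⟩, congrArg Subtype.val (s.left_inv hsource)⟩
  · rw [← continuousOn_univ, ← htarget]
    exact s.continuousOn_symm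
  · exact s.symm.injOn (by simp [htarget]) (by simp [htarget]) (Subtype.ext h)

variable [FiniteDimensional ℝ W] {f : V → W} {U : Set V}

theorem finrank_le_succ_of_injOn_sphere (hU : IsOpen U) (hne : (sphere 0 1 ∩ U).Nonempty)
    (hf : ContinuousOn f (sphere 0 1 ∩ U)) (hinj : Set.InjOn f (sphere 0 1 ∩ U)) :
    Module.finrank ℝ V ≤ Module.finrank ℝ W + 1 := by
  obtain ⟨y, hy, hyU⟩ := hne
  rcases hn : Module.finrank ℝ V with - | n
  · exact Nat.zero_le _
  obtain ⟨g, hg, hginj, hgmem, z, rfl⟩ := exists_chart_sphere hn hy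
  have := finrank_le_of_injOn (f := f ∘ g) (hU.preimage hg) ⟨z, hyU⟩
    (hf.comp hg.continuousOn fun z hz ↦ ⟨hgmem z, hz⟩)
    (hinj.comp hginj.injOn fun z hz ↦ ⟨hgmem z, hz⟩)
  simpa using this

theorem isOpen_image_sphere_inter (hVW : Module.finrank ℝ V = Module.finrank ℝ W + 1)
    (hU : IsOpen U) (hf : ContinuousOn f (sphere 0 1 ∩ U))
    (hinj : Set.InjOn f (sphere 0 1 ∩ U)) : IsOpen (f '' (sphere 0 1 ∩ U)) := by
  refine isOpen_iff_mem_nhds.2 (Set.forall_mem_image.2 fun y hy ↦ ?_)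
  obtain ⟨g, hg, hginj, hgmem, z, rfl⟩ := exists_chart_sphere hVW hy.1
  let e := (stdOrthonormalBasis ℝ W).repr
  have hmaps : Set.MapsTo (g ∘ e) ((g ∘ e) ⁻¹' U) (sphere 0 1 ∩ U) := fun w hw ↦ ⟨hgmem _, hw⟩
  have hopen := isOpen_image_of_injOn (f := f ∘ g ∘ e)
    (hU.preimage (hg.comp e.continuous)) (hf.comp (hg.comp e.continuous).continuousOn hmaps)
    (hinj.comp (hginj.comp e.injective).injOn hmaps)
  refine Filter.mem_of_superset (hopen.mem_nhds ⟨e.symm z, ?_⟩) ?_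
  · simpa using hy.2
  · rw [Set.image_comp]
    exact Set.image_mono hmaps.image_subset

end Sphere

end AlexanderSpanier

/-! ### Faces of a regular CW complex -/

theorem continuousOn_of_leftInvOn {Y Z : Type*} [TopologicalSpace Y] [TopologicalSpace Z]
    [T2Space Z] {f : Y → Z} {g : Z → Y} {K : Set Y} (hK : IsCompact K) (hf : ContinuousOn f K)
    (hg : Set.LeftInvOn g f K) : ContinuousOn g (f '' K) := by
  refine continuousOn_iff_isClosed.2 fun T hT ↦ ⟨f '' (K ∩ T),
    ((hK.inter_right hT).image_of_continuousOn (hf.mono Set.inter_subset_left)).isClosed, ?_⟩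
  ext z
  constructor
  · rintro ⟨hz, x, hx, rfl⟩
    exact ⟨⟨x, ⟨hx, by simpa [hg hx] using hz⟩, rfl⟩, x, hx, rfl⟩
  · rintro ⟨⟨x, ⟨hx, hxT⟩, rfl⟩, hz⟩
    exact ⟨by simpa [hg hx] using hxT, hz⟩

namespace RegularCW

open Metric

variable {F X : Type} [Fintype F] [TopologicalSpace X] (C : RegularCW F X) {f g h τ : F} {x : X}
  {O : Set X}

/-- The characteristic map of the face `f`, extended by a constant to the whole Euclidean space. -/
noncomputable def extCharMap (f : F) : EuclideanSpace ℝ (Fin (C.dim f)) → X :=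
  Function.extend Subtype.val (C.charMap f) fun _ ↦ C.charMap f ⟨0, mem_closedBall_self zero_le_one⟩

theorem extCharMap_coe (y : closedBall (0 : EuclideanSpace ℝ (Fin (C.dim f))) 1) :
    C.extCharMap f y = C.charMap f y :=
  Subtype.val_injective.extend_apply _ _ _

theorem continuousOn_extCharMap : ContinuousOn (C.extCharMap f) (closedBall 0 1) := by
  rw [continuousOn_iff_continuous_domRestrict]
  exact (C.continuous_charMap f).congr fun y ↦ (C.extCharMap_coe y).symm

theorem injOn_extCharMap : Set.InjOn (C.extCharMap f) (closedBall 0 1) := by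
  refine Set.injOn_iff_injective.2 fun y z hyz ↦ C.injective_charMap f ?_
  rw [← extCharMap_coe, ← extCharMap_coe]
  exact hyz

theorem image_extCharMap_closedBall : C.extCharMap f '' closedBall 0 1 = C.cell f := by
  rw [Set.image_eq_range]
  exact congrArg Set.range (funext C.extCharMap_coe)

/-- The open cell of the face `f`. -/
def openCell (f : F) : Set X := C.extCharMap f '' ball 0 1

/-- The image of the unit sphere under the characteristic map of the face `f`. -/
def cellFrontier (f : F) : Set X := C.extCharMap f '' sphere 0 1

theorem openCell_union_cellFrontier : C.openCell f ∪ C.cellFrontier f = C.cell f := by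
  rw [← image_extCharMap_closedBall, openCell, cellFrontier, ← Set.image_union, ball_union_sphere]

theorem openCell_subset_cell : C.openCell f ⊆ C.cell f :=
  Set.subset_union_left.trans_eq C.openCell_union_cellFrontier

theorem cellFrontier_subset_cell : C.cellFrontier f ⊆ C.cell f :=
  Set.subset_union_right.trans_eq C.openCell_union_cellFrontier

theorem openCell_nonempty : (C.openCell f).Nonempty :=
  (nonempty_ball.2 zero_lt_one).image _

theorem isCompact_cell : IsCompact (C.cell f) :=
  C.image_extCharMap_closedBall ▸ (isCompact_closedBall 0 1).image_of_continuousOn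
    C.continuousOn_extCharMap

theorem isCompact_cellFrontier : IsCompact (C.cellFrontier f) :=
  (isCompact_sphere 0 1).image_of_continuousOn
    (C.continuousOn_extCharMap.mono sphere_subset_closedBall)

theorem isCompact_real (D : Finset F) : IsCompact (C.real D) :=
  D.isCompact_biUnion fun _ _ ↦ C.isCompact_cell

theorem compactSpace (C : RegularCW F X) : CompactSpace X := by
  refine ⟨?_⟩
  rw [← C.cover]
  exact isCompact_iUnion fun _ ↦ C.isCompact_cell

theorem eq_of_mem_openCell (hf : x ∈ C.openCell f) (hg : x ∈ C.openCell g) : f = g := by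
  by_contra hfg
  obtain ⟨y, hy, rfl⟩ := hf
  obtain ⟨z, hz, hyz⟩ := hg
  refine Set.disjoint_left.1 (C.disjoint_openCells f g hfg)
    ⟨⟨y, ball_subset_closedBall hy⟩, mem_ball_zero_iff.1 hy, (C.extCharMap_coe _).symm⟩
    ⟨⟨z, ball_subset_closedBall hz⟩, mem_ball_zero_iff.1 hz, ?_⟩
  rw [← hyz]
  exact (C.extCharMap_coe _).symm

theorem exists_mem_cell_of_mem_cellFrontier (hx : x ∈ C.cellFrontier f) :
    ∃ g, C.dim g < C.dim f ∧ x ∈ C.cell g := by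
  obtain ⟨y, hy, rfl⟩ := hx
  have := C.boundary f ⟨⟨y, sphere_subset_closedBall hy⟩, mem_sphere_zero_iff_norm.1 hy,
    (C.extCharMap_coe _).symm⟩
  obtain ⟨g, hgf, hxg⟩ := Set.mem_iUnion₂.1 this
  exact ⟨g, hgf, hxg⟩

theorem exists_mem_openCell_of_mem_cellFrontier (hx : x ∈ C.cellFrontier f) :
    ∃ g, C.dim g < C.dim f ∧ x ∈ C.openCell g := by
  induction hn : C.dim f using Nat.strong_induction_on generalizing f with
  | _ n ih =>
    obtain ⟨g, hgf, hxg⟩ := C.exists_mem_cell_of_mem_cellFrontier hx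
    rw [hn] at hgf
    rcases C.openCell_union_cellFrontier.symm ▸ hxg with hxg | hxg
    · exact ⟨g, hgf, hxg⟩
    · obtain ⟨k, hkg, hxk⟩ := ih _ hgf hxg rfl
      exact ⟨k, hkg.trans hgf, hxk⟩

theorem dim_lt_of_mem_openCell_of_mem_cellFrontier (hf : x ∈ C.openCell f)
    (hg : x ∈ C.cellFrontier g) : C.dim f < C.dim g := by
  obtain ⟨k, hkg, hxk⟩ := C.exists_mem_openCell_of_mem_cellFrontier hg
  rwa [C.eq_of_mem_openCell hf hxk]

theorem eq_or_dim_lt_of_mem_openCell_of_mem_cell (hf : x ∈ C.openCell f) (hg : x ∈ C.cell g) :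
    f = g ∨ C.dim f < C.dim g := by
  rw [← openCell_union_cellFrontier] at hg
  exact hg.imp (C.eq_of_mem_openCell hf) (C.dim_lt_of_mem_openCell_of_mem_cellFrontier hf)

theorem cell_subset_closure_openCell : C.cell f ⊆ closure (C.openCell f) := by
  rw [← image_extCharMap_closedBall, ← closure_ball _ one_ne_zero]
  refine ContinuousOn.image_closure ?_
  rw [closure_ball _ one_ne_zero]
  exact C.continuousOn_extCharMap

theorem exists_image_sphere_inter_eq (hO : IsOpen O) :
    ∃ U, IsOpen U ∧ C.extCharMap τ '' (sphere 0 1 ∩ U) = O ∩ C.cellFrontier τ := by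
  obtain ⟨U, hU, hUO⟩ := continuousOn_iff'.1
    (C.continuousOn_extCharMap.mono sphere_subset_closedBall) O hO
  refine ⟨U, hU, ?_⟩
  rw [Set.inter_comm, ← hUO, Set.inter_comm _ (sphere _ _), Set.image_inter_preimage,
    Set.inter_comm, cellFrontier]

/-- The inverse of the characteristic map of the face `f`, with junk values outside the closed
cell. -/
noncomputable def chart (f : F) : X → EuclideanSpace ℝ (Fin (C.dim f)) :=
  Function.invFunOn (C.extCharMap f) (closedBall 0 1)

theorem leftInvOn_chart : Set.LeftInvOn (C.chart f) (C.extCharMap f) (closedBall 0 1) :=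
  C.injOn_extCharMap.leftInvOn_invFunOn

theorem rightInvOn_chart : Set.RightInvOn (C.chart f) (C.extCharMap f) (C.cell f) := by
  rw [← image_extCharMap_closedBall]
  exact (Set.surjOn_image _ _).rightInvOn_invFunOn

variable [T2Space X]

theorem continuousOn_chart : ContinuousOn (C.chart f) (C.cell f) := by
  rw [← image_extCharMap_closedBall]
  exact continuousOn_of_leftInvOn (isCompact_closedBall 0 1) C.continuousOn_extCharMap
    C.leftInvOn_chart

theorem isClosed_biUnion_cell (s : Set F) : IsClosed (⋃ f ∈ s, C.cell f) :=
  s.toFinite.isClosed_biUnion fun _ _ ↦ C.isCompact_cell.isClosed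

theorem continuousOn_injOn_chart_comp_extCharMap {U : Set (EuclideanSpace ℝ (Fin (C.dim τ)))}
    (hU : Set.MapsTo (C.extCharMap τ) (sphere 0 1 ∩ U) (C.cell h)) :
    ContinuousOn (C.chart h ∘ C.extCharMap τ) (sphere 0 1 ∩ U) ∧
      Set.InjOn (C.chart h ∘ C.extCharMap τ) (sphere 0 1 ∩ U) := by
  have hsub : sphere 0 1 ∩ U ⊆ closedBall 0 1 := Set.inter_subset_left.trans
    sphere_subset_closedBall
  exact ⟨C.continuousOn_chart.comp (C.continuousOn_extCharMap.mono hsub) hU,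
    C.rightInvOn_chart.injOn.comp (C.injOn_extCharMap.mono hsub) hU⟩

theorem dim_le_succ_of_inter_cellFrontier_subset (hO : IsOpen O)
    (hne : (O ∩ C.cellFrontier τ).Nonempty) (hsub : O ∩ C.cellFrontier τ ⊆ C.cell h) :
    C.dim τ ≤ C.dim h + 1 := by
  obtain ⟨U, hU, himage⟩ := C.exists_image_sphere_inter_eq (τ := τ) hO
  rw [← himage] at hne hsub
  obtain ⟨hcont, hinj⟩ := C.continuousOn_injOn_chart_comp_extCharMap
    (Set.mapsTo_iff_image_subset.2 hsub)
  simpa using AlexanderSpanier.finrank_le_succ_of_injOn_sphere hU hne.of_image hcont hinj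

theorem isOpen_chart_image_inter_cellFrontier (hdim : C.dim τ = C.dim h + 1) (hO : IsOpen O)
    (hsub : O ∩ C.cellFrontier τ ⊆ C.cell h) :
    IsOpen (C.chart h '' (O ∩ C.cellFrontier τ)) := by
  obtain ⟨U, hU, himage⟩ := C.exists_image_sphere_inter_eq (τ := τ) hO
  rw [← himage] at hsub ⊢
  obtain ⟨hcont, hinj⟩ := C.continuousOn_injOn_chart_comp_extCharMap
    (Set.mapsTo_iff_image_subset.2 hsub)
  rw [← Set.image_comp]
  exact AlexanderSpanier.isOpen_image_sphere_inter (by simpa using hdim) hU hcont hinj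

theorem exists_isOpen_inter_cellFrontier_eq (hO : IsOpen O)
    (hmax : ∀ g, (C.openCell g ∩ (O ∩ C.cellFrontier τ)).Nonempty → C.dim g ≤ C.dim h) :
    ∃ O', IsOpen O' ∧ O' ∩ C.cellFrontier τ = C.openCell h ∩ (O ∩ C.cellFrontier τ) := by
  refine ⟨O \ ⋃ g ∈ {g | g ≠ h ∧ C.dim g ≤ C.dim h}, C.cell g,
    hO.sdiff (C.isClosed_biUnion_cell _), ?_⟩
  ext x
  simp only [Set.mem_inter_iff, Set.mem_sdiff, Set.mem_iUnion, not_exists]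
  constructor
  · rintro ⟨⟨hxO, hx⟩, hxτ⟩
    obtain ⟨g, -, hxg⟩ := C.exists_mem_openCell_of_mem_cellFrontier hxτ
    have hgh : g = h := by
      by_contra hne
      exact hx g ⟨hne, hmax g ⟨x, hxg, hxO, hxτ⟩⟩ (C.openCell_subset_cell hxg)
    exact ⟨hgh ▸ hxg, hxO, hxτ⟩
  · rintro ⟨hxh, hxO, hxτ⟩
    refine ⟨⟨hxO, fun g ⟨hgh, hdim⟩ hxg ↦ ?_⟩, hxτ⟩
    exact (C.eq_or_dim_lt_of_mem_openCell_of_mem_cell hxh hxg).elim (hgh ·.symm) hdim.not_gt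

theorem cell_subset_cellFrontier (hdim : C.dim τ = C.dim h + 1)
    (hne : (C.openCell h ∩ C.cellFrontier τ).Nonempty) : C.cell h ⊆ C.cellFrontier τ := by
  obtain ⟨O, hO, hOτ⟩ := C.exists_isOpen_inter_cellFrontier_eq (τ := τ) (h := h) isOpen_univ
    fun g ⟨x, hxg, _, hxτ⟩ ↦ Nat.lt_succ_iff.1 <|
      (C.dim_lt_of_mem_openCell_of_mem_cellFrontier hxg hxτ).trans_eq hdim
  rw [Set.univ_inter] at hOτ
  have hpre : C.chart h '' (C.openCell h ∩ C.cellFrontier τ) =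
      ball 0 1 ∩ C.extCharMap h ⁻¹' C.cellFrontier τ := by
    rw [openCell, ← Set.image_inter_preimage]
    exact (C.leftInvOn_chart.mono (Set.inter_subset_left.trans ball_subset_closedBall)).image_image
  have hopen : IsOpen (ball 0 1 ∩ C.extCharMap h ⁻¹' C.cellFrontier τ) := by
    rw [← hpre, ← hOτ]
    refine C.isOpen_chart_image_inter_cellFrontier hdim hO ?_
    exact hOτ.trans_subset (Set.inter_subset_left.trans C.openCell_subset_cell)
  have hopen' : IsOpen (ball 0 1 ∩ C.extCharMap h ⁻¹' (C.cellFrontier τ)ᶜ) :=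
    (C.continuousOn_extCharMap.mono ball_subset_closedBall).isOpen_inter_preimage isOpen_ball
      C.isCompact_cellFrontier.isClosed.isOpen_compl
  have hball : ball 0 1 ⊆ ball 0 1 ∩ C.extCharMap h ⁻¹' C.cellFrontier τ := by
    refine (convex_ball _ _).isPreconnected.subset_left_of_subset_union hopen hopen' ?_ ?_ ?_
    · exact Set.disjoint_left.2 fun y hy hy' ↦ hy'.2 hy.2
    · exact fun y hy ↦ (em _).imp (⟨hy, ·⟩) (⟨hy, ·⟩)
    · obtain ⟨_, ⟨y, hy, rfl⟩, hyτ⟩ := hne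
      exact ⟨y, hy, hy, hyτ⟩
  have hsub : C.openCell h ⊆ C.cellFrontier τ := Set.image_subset_iff.2 fun y hy ↦ (hball hy).2
  exact C.cell_subset_closure_openCell.trans
    (closure_minimal hsub C.isCompact_cellFrontier.isClosed)

theorem exists_cell_subset_of_mem_cellFrontier (hx : x ∈ C.cellFrontier τ) :
    ∃ g, C.dim g < C.dim τ ∧ x ∈ C.cell g ∧ C.cell g ⊆ C.cell τ := by
  classical
  by_contra! hcon
  set Q : Set X := ⋃ g ∈ {g | C.dim g < C.dim τ ∧ C.cell g ⊆ C.cell τ}, C.cell g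
  have hxQ : x ∈ Qᶜ ∩ C.cellFrontier τ := by
    refine ⟨fun h ↦ ?_, hx⟩
    obtain ⟨g, ⟨hdim, hsub⟩, hxg⟩ := Set.mem_iUnion₂.1 h
    exact hcon g hdim hxg hsub
  obtain ⟨g, -, hxg⟩ := C.exists_mem_openCell_of_mem_cellFrontier hx
  obtain ⟨h, hh, hmax⟩ := Set.exists_max_image
    {h | (C.openCell h ∩ (Qᶜ ∩ C.cellFrontier τ)).Nonempty} C.dim (Set.toFinite _) ⟨g, x, hxg, hxQ⟩
  obtain ⟨O, hO, hOτ⟩ := C.exists_isOpen_inter_cellFrontier_eq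
    (C.isClosed_biUnion_cell _).isOpen_compl hmax
  have hdim_le : C.dim τ ≤ C.dim h + 1 := C.dim_le_succ_of_inter_cellFrontier_subset hO
    (hOτ ▸ hh) (hOτ.trans_subset (Set.inter_subset_left.trans C.openCell_subset_cell))
  obtain ⟨z, hzh, hzQ, hzτ⟩ := hh
  have hdim_lt := C.dim_lt_of_mem_openCell_of_mem_cellFrontier hzh hzτ
  have hsub : C.cell h ⊆ C.cellFrontier τ :=
    C.cell_subset_cellFrontier (by lia) ⟨z, hzh, hzτ⟩
  exact hzQ (Set.mem_biUnion ⟨hdim_lt, hsub.trans C.cellFrontier_subset_cell⟩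
    (C.openCell_subset_cell hzh))

end RegularCW

/-! ### The Euler characteristic of a subcomplex -/

namespace AlexanderSpanier

open scoped unitInterval

theorem isCohomologyCell_zero_of_contractibleSpace {E : Type*} [UniformSpace E] {A : Set E}
    (hA : IsCompact A) [ContractibleSpace A] : IsCohomologyCell 0 A ∅ := by
  classical
  obtain ⟨c, ⟨H⟩⟩ := id_nullhomotopic A
  let h (p : ℝ × E) : E :=
    if hp : p.2 ∈ A then H (Set.projIcc 0 1 zero_le_one p.1, ⟨p.2, hp⟩) else p.2
  have h_apply (t : I) (x : A) : h (t, x) = H (t, x) := by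
    simp only [h, Subtype.coe_prop, dif_pos, Set.projIcc_val, Subtype.coe_eta]
  have h_cont : ContinuousOn h (I ×ˢ A) := by
    rw [continuousOn_iff_continuous_domRestrict]
    have : Continuous fun p : ↥(I ×ˢ A) ↦ (H (⟨p.1.1, p.2.1⟩, ⟨p.1.2, p.2.2⟩) : E) := by
      fun_prop
    exact this.congr fun p ↦ (h_apply ⟨p.1.1, p.2.1⟩ ⟨p.1.2, p.2.2⟩).symm
  refine isCohomologyCell_zero_of_contraction (h := h) (c := c)
    (.of_isCompact (isCompact_Icc.prod hA) h_cont ?_ (by simp)) c.2 ?_ ?_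
  · rintro ⟨t, x⟩ ⟨ht, hx⟩
    exact h_apply ⟨t, ht⟩ ⟨x, hx⟩ ▸ Subtype.coe_prop _
  · exact fun x hx ↦ (h_apply 0 ⟨x, hx⟩).trans (congrArg Subtype.val (H.apply_zero _))
  · exact fun x hx ↦ (h_apply 1 ⟨x, hx⟩).trans (congrArg Subtype.val (H.apply_one _))

end AlexanderSpanier

namespace RegularCW

open Metric AlexanderSpanier

section Faces

variable {F X : Type} [Fintype F] [DecidableEq F] [TopologicalSpace X] {C : RegularCW F X}
  {D : Finset F} {f : F}

theorem Subcomplex.of_insert (hD : C.Subcomplex (insert f D)) (hf : f ∉ D)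
    (hmax : ∀ g ∈ D, C.dim g ≤ C.dim f) : C.Subcomplex D := by
  intro g h hgh hh
  refine (Finset.mem_insert.1 (hD g h hgh (Finset.mem_insert_of_mem hh))).resolve_left ?_
  rintro rfl
  obtain ⟨x, hx⟩ := C.openCell_nonempty (f := g)
  rcases C.eq_or_dim_lt_of_mem_openCell_of_mem_cell hx (hgh (C.openCell_subset_cell hx)) with h | h
  · exact hf (h ▸ hh)
  · exact (hmax _ hh).not_gt h

variable (C) in
theorem real_insert (f : F) (D : Finset F) : C.real (insert f D) = C.real D ∪ C.cell f := by
  simp only [real, Finset.set_biUnion_insert, Set.union_comm]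

theorem Subcomplex.real_inter_cell [T2Space X] (hD : C.Subcomplex (insert f D)) (hf : f ∉ D)
    (hmax : ∀ g ∈ D, C.dim g ≤ C.dim f) : C.real D ∩ C.cell f = C.cellFrontier f := by
  ext x
  simp only [real, Set.mem_inter_iff, Set.mem_iUnion₂, exists_prop]
  constructor
  · rintro ⟨⟨g, hg, hxg⟩, hxf⟩
    rw [← openCell_union_cellFrontier] at hxf
    refine hxf.resolve_left fun hxo ↦ ?_
    rcases C.eq_or_dim_lt_of_mem_openCell_of_mem_cell hxo hxg with rfl | h
    · exact hf hg
    · exact (hmax g hg).not_gt h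
  · intro hx
    obtain ⟨g, hdim, hxg, hgf⟩ := C.exists_cell_subset_of_mem_cellFrontier hx
    refine ⟨⟨g, ?_, hxg⟩, C.cellFrontier_subset_cell hx⟩
    refine (Finset.mem_insert.1 (hD g f hgf (Finset.mem_insert_self f D))).resolve_left ?_
    rintro rfl
    exact hdim.false

end Faces

section EulerCharacteristic

variable {F X : Type} [Fintype F] [UniformSpace X] [T2Space X] (C : RegularCW F X) {D : Finset F}

theorem isCohomologyCell_cell (f : F) :
    IsCohomologyCell (C.dim f) (C.cell f) (C.cellFrontier f) := by
  have hext : IsPairMap (C.extCharMap f) (closedBall 0 1) (sphere 0 1) (C.cell f)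
      (C.cellFrontier f) := .of_isCompact (isCompact_closedBall 0 1) C.continuousOn_extCharMap
    (C.image_extCharMap_closedBall ▸ Set.mapsTo_image _ _) (Set.mapsTo_image _ _)
  have hchart : IsPairMap (C.chart f) (C.cell f) (C.cellFrontier f) (closedBall 0 1)
      (sphere 0 1) := by
    refine .of_isCompact C.isCompact_cell C.continuousOn_chart ?_ ?_
    · rw [← image_extCharMap_closedBall]
      exact Set.mapsTo_image_iff.2 fun y hy ↦ by rwa [Function.comp_apply, C.leftInvOn_chart hy]
    · refine Set.mapsTo_image_iff.2 fun y hy ↦ ?_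
      rwa [Function.comp_apply, C.leftInvOn_chart (sphere_subset_closedBall hy)]
  exact (isCohomologyCell_closedBall_euclideanSpace _).of_bijective <|
    hext.inducedMap_bijective hchart sphere_subset_closedBall C.cellFrontier_subset_cell
      C.leftInvOn_chart C.rightInvOn_chart

variable {C}

theorem Subcomplex.hasFiniteCohomology_and_eulerChar_eq (hD : C.Subcomplex D) :
    HasFiniteCohomology (C.real D) ∅ ∧ eulerChar (C.real D) ∅ = ∑ f ∈ D, (-1) ^ C.dim f := by
  classical
  induction D using Finset.induction_on_max_value C.dim with
  | empty => simpa [real] using ⟨HasFiniteCohomology.refl ∅, eulerChar_self ∅⟩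
  | insert f s hf hmax ih =>
    obtain ⟨hfin, heuler⟩ := ih (hD.of_insert hf hmax)
    have hcell : IsCohomologyCell (C.dim f) (C.real (insert f s)) (C.real s) := by
      rw [real_insert]
      refine IsCohomologyCell.union ?_ (C.isCompact_real s) C.isCompact_cell.isClosed
      rw [hD.real_inter_cell hf hmax]
      exact C.isCohomologyCell_cell f
    have hsub : C.real s ⊆ C.real (insert f s) :=
      Set.subset_union_left.trans_eq (C.real_insert f s).symm
    refine ⟨hcell.hasFiniteCohomology.trans hfin hsub (Set.empty_subset _), ?_⟩
    rw [eulerChar_eq_add hcell.hasFiniteCohomology hfin hsub (Set.empty_subset _),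
      hcell.eulerChar_eq, heuler, Finset.sum_insert hf]

end EulerCharacteristic

theorem Subcomplex.sum_neg_one_pow_dim_eq_one {F X : Type} [Fintype F] [TopologicalSpace X]
    [T2Space X] {C : RegularCW F X} {D : Finset F} (hD : C.Subcomplex D)
    [ContractibleSpace (C.real D)] : ∑ f ∈ D, (-1 : ℤ) ^ C.dim f = 1 := by
  have := C.compactSpace
  let _ : UniformSpace X := uniformSpaceOfCompactR1
  rw [← hD.hasFiniteCohomology_and_eulerChar_eq.2]
  exact (isCohomologyCell_zero_of_contractibleSpace (C.isCompact_real D)).eulerChar_eq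

end RegularCW

/-! ### Counting critical faces -/

section MorseMatching

variable {F : Type} {S : MorseSetup F} {Φ Ψ : Finset (F × F)} {D : Finset F} {j : ℕ} {x : F}

theorem MorseSetup.ne_of_facet {σ τ : F} (h : S.facet σ τ) : σ ≠ τ := by
  rintro rfl
  exact (Nat.lt_succ_self _).ne (S.facet_dim σ σ h)

theorem IsDVF.mono (hΦ : IsDVF S Φ) (h : Ψ ⊆ Φ) : IsDVF S Ψ :=
  ⟨fun p hp ↦ hΦ.1 p (h hp), fun p hp q hq ↦ hΦ.2 p (h hp) q (h hq)⟩

theorem HasClosedGradientPath.mono (hΨ : HasClosedGradientPath S Ψ) (h : Ψ ⊆ Φ) :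
    HasClosedGradientPath S Φ := by
  obtain ⟨k, σ, T, hk, hmem, hfacet, hclosed⟩ := hΨ
  exact ⟨k, σ, T, hk, fun i hi ↦ h (hmem i hi), hfacet, hclosed⟩

theorem IsMorseMatching.mono (hΦ : IsMorseMatching S Φ) (h : Ψ ⊆ Φ) : IsMorseMatching S Ψ :=
  ⟨hΦ.1.mono h, fun hΨ ↦ hΦ.2 (hΨ.mono h)⟩

theorem OutwardlyMatched.not_isCritical (hx : OutwardlyMatched Φ D x) : ¬IsCritical Φ x := by
  obtain ⟨-, p, hp, ⟨rfl, -⟩ | ⟨rfl, -⟩⟩ := hx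
  · exact fun h ↦ (h p hp).1 rfl
  · exact fun h ↦ (h p hp).2 rfl

theorem IsDVF.eq_of_mem_pair (hΦ : IsDVF S Φ) {p q : F × F} (hp : p ∈ Φ) (hq : q ∈ Φ)
    (hxp : x = p.1 ∨ x = p.2) (hxq : x = q.1 ∨ x = q.2) : p = q := by
  by_contra hpq
  have := hΦ.2 p hp q hq hpq
  grind

theorem IsDVF.sum_neg_one_pow_dim_eq_sum_filter_isCritical [DecidablePred (IsCritical Φ)]
    (hΦ : IsDVF S Φ) (hD : ∀ p ∈ Φ, p.1 ∈ D ∧ p.2 ∈ D) :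
    ∑ x ∈ D, (-1 : ℤ) ^ S.dim x = ∑ x ∈ D with IsCritical Φ x, (-1) ^ S.dim x := by
  classical
  have hmatched : {x ∈ D | ¬IsCritical Φ x} = Φ.biUnion fun p ↦ {p.1, p.2} := by
    ext x
    simp only [IsCritical, Finset.mem_biUnion]
    grind
  rw [← Finset.sum_filter_add_sum_filter_not D (IsCritical Φ), hmatched, Finset.sum_biUnion,
    add_eq_left]
  · refine Finset.sum_eq_zero fun p hp ↦ ?_
    rw [Finset.sum_pair (S.ne_of_facet (hΦ.1 p hp)), S.facet_dim _ _ (hΦ.1 p hp), pow_succ,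
      mul_neg_one, add_neg_cancel]
  · exact fun p hp q hq hpq ↦ Finset.disjoint_left.2 fun x hxp hxq ↦
      hpq (hΦ.eq_of_mem_pair hp hq (by simpa using hxp) (by simpa using hxq))

theorem IsDVF.isCritical_filter_iff [DecidablePred (· ∈ D)] (hΦ : IsDVF S Φ) (hx : x ∈ D) :
    IsCritical {p ∈ Φ | p.1 ∈ D ∧ p.2 ∈ D} x ↔ IsCritical Φ x ∨ OutwardlyMatched Φ D x := by
  constructor
  · simp only [IsCritical, OutwardlyMatched, Finset.mem_filter]
    grind
  · rintro (h | ⟨-, p, hp, hpx⟩) q hq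
    · exact h q (Finset.mem_of_mem_filter q hq)
    · rw [Finset.mem_filter] at hq
      refine not_or.1 fun hxq ↦ ?_
      obtain rfl : p = q := hΦ.eq_of_mem_pair hp hq.1 (by grind) hxq
      exact hpx.elim (·.2 hq.2.2) (·.2 hq.2.1)

theorem IsOutJCollapsingSeq.sum_neg_one_pow_dim_eq (hΦ : IsOutJCollapsingSeq S Φ D j) :
    ∑ x ∈ D, (-1 : ℤ) ^ S.dim x =
      1 + Nat.card {x // OutwardlyMatched Φ D x} * (-1) ^ j := by
  classical
  obtain ⟨⟨v, hvD, ⟨hdvf, -⟩, hv_dim, hcrit⟩, hj⟩ := hΦ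
  have hcritical : {x ∈ D | IsCritical {p ∈ Φ | p.1 ∈ D ∧ p.2 ∈ D} x} =
      insert v {x ∈ D | OutwardlyMatched Φ D x} := by
    ext x
    have := hdvf.isCritical_filter_iff (D := D) (x := x)
    grind
  have hv : v ∉ ({x ∈ D | OutwardlyMatched Φ D x} : Finset F) := fun h ↦
    (Finset.mem_filter.1 h).2.not_isCritical ((hcrit v).2 rfl)
  have hdim : ∀ x ∈ ({x ∈ D | OutwardlyMatched Φ D x} : Finset F),
      (-1 : ℤ) ^ S.dim x = (-1) ^ j := fun x hx ↦ by rw [hj x (Finset.mem_filter.1 hx).2]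
  rw [(hdvf.mono (Finset.filter_subset _ Φ)).sum_neg_one_pow_dim_eq_sum_filter_isCritical
      fun p hp ↦ (Finset.mem_filter.1 hp).2,
    hcritical, Finset.sum_insert hv, hv_dim, pow_zero, Finset.sum_congr rfl hdim,
    Finset.sum_const, nsmul_eq_mul, Nat.subtype_card]
  exact fun x ↦ Finset.mem_filter.trans (and_iff_right_of_imp And.left)

theorem IsOutJCollapsingSeq.exists_isCollapsingSeqOn [DecidableEq F]
    (hΦ : IsOutJCollapsingSeq S Φ D j) (hout : ∀ x, ¬OutwardlyMatched Φ D x) :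
    ∃ v ∈ D, IsCollapsingSeqOn S {p ∈ Φ | p.1 ∈ D ∧ p.2 ∈ D} D v := by
  obtain ⟨⟨v, hvD, hmorse, hv_dim, hcrit⟩, -⟩ := hΦ
  refine ⟨v, hvD, hmorse.mono (Finset.filter_subset _ Φ), hvD, hv_dim,
    fun p hp ↦ (Finset.mem_filter.1 hp).2, fun x hx ↦ ?_⟩
  rw [hmorse.1.isCritical_filter_iff hx, or_iff_left (hout x), hcrit]

end MorseMatching

/-- Let `(C, D)` be an out-`j` collapsible pair with `D` nonempty. If the
subcomplex `D` is contractible then there are no outwardly matched faces, the collapsing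
sequence restricts to a collapsing sequence of `D` onto a vertex, and hence `D` is
collapsible. -/
theorem stmt1 {F X : Type} [Fintype F] [DecidableEq F] [TopologicalSpace X] [T2Space X]
    (C : RegularCW F X) (D : Finset F) (hD : C.Subcomplex D) (hDne : D.Nonempty)
    (j : ℕ) (Φ : Finset (F × F)) (hΦ : IsOutJCollapsingSeq C.toSetup Φ D j)
    (hcontr : ContractibleSpace (C.real D)) :
    Nat.card {τ : F // OutwardlyMatched Φ D τ} = 0 ∧
      ∃ v ∈ D, IsCollapsingSeqOn C.toSetup
        (Φ.filter (fun p => p.1 ∈ D ∧ p.2 ∈ D)) D v := by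
  have hcard : Nat.card {τ : F // OutwardlyMatched Φ D τ} = 0 := by
    have hsum : (1 : ℤ) = 1 + Nat.card {τ : F // OutwardlyMatched Φ D τ} * (-1) ^ j :=
      hD.sum_neg_one_pow_dim_eq_one.symm.trans hΦ.sum_neg_one_pow_dim_eq
    simpa using hsum
  have hout : IsEmpty {τ : F // OutwardlyMatched Φ D τ} := Finite.card_eq_zero_iff.1 hcard
  exact ⟨hcard, hΦ.exists_isCollapsingSeqOn fun τ hτ ↦ hout.false ⟨τ, hτ⟩⟩
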